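/- arXiv:1612.08439 — 2 statements merged into one kernel-verified Lean document; each statement's English description precedes it below -/
import Mathlib

section
/- Let x₀, x₀′, x₁, x₁′ be points of 𝕋¹ and let ε > 0 be a real number. Then there exists a real number δ > 0 with the following property: for any two C¹ diffeomorphisms g₀, g₁ of 𝕋¹, each different from the identity, each δ-close to the identity in the C¹ topology, and such that x_i and x_i′ are fixed points of g_i for i ∈ {0,1}, and for every integer j ≥ 1, there exists a homeomorphism f of the closed annulus 𝕋¹ × [0,1], isotopic to the identity, preserving Lebesgue measure, admitting a lift f̌ to ℝ × [0,1] whose rotation set is {0}, and satisfying: (a) f(x,0) = (g₀(x), 0) and f(x,1) = (g₁(x), 1) for every x ∈ 𝕋¹; (b-1) there exists a continuous path σ : [0,1] → 𝕋¹ × [0,1] with σ(0) ∈ 𝕋¹ × {0}, σ(1) ∈ 𝕋¹ × {1}, σ(t) ∈ 𝕋¹ × (0,1) for all t ∈ (0,1), whose image does not meet the fixed point set of f; (b-2) there exists a loop contained in 𝕋¹ × (0,1), not null-homotopic in 𝕋¹ × [0,1], whose image does not meet the fixed point set of f; (c) for every real number η > 0 there exist a point ž ∈ [0,η] × [0,1]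 ⊆ ℝ × [0,1] and an integer n ≥ 1 such that f̌ⁿ(ž) ∈ [j, j+η] × [0,1]; (d) sup_{z ∈ 𝕋¹×[0,1]} dist(f(z), z) < ε. -/
open MeasureTheory Filter Topology Set unitInterval

noncomputable section

/-- The circle `𝕋¹ = ℝ/ℤ`. -/
abbrev T1 : Type := AddCircle (1 : ℝ)

/-- The closed annulus `𝕋¹ × [0,1]`. -/
abbrev CAnn : Type := T1 × I

/-- The universal covering map `π : ℝ × [0,1] → 𝕋¹ × [0,1]`. -/
def pCA : ℝ × I → CAnn := fun z => ((z.1 : T1), z.2)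

/-- `g` is a C¹ diffeomorphism of the circle which is `δ`-close to the identity in the
C¹ topology: it admits a C¹ lift `gc` with `gc(x+1) = gc(x)+1`, nonvanishing derivative,
`|gc(x) − x| < δ` and `|gc′(x) − 1| < δ` for all `x`. -/
def CircleC1DiffeoClose (δ : ℝ) (g : T1 ≃ₜ T1) : Prop :=
  ∃ gc : ℝ → ℝ, ContDiff ℝ 1 gc ∧ (∀ x, deriv gc x ≠ 0) ∧
    (∀ x, gc (x + 1) = gc x + 1) ∧
    (∀ x : ℝ, g ((x : ℝ) : T1) = ((gc x : ℝ) : T1)) ∧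
    (∀ x, |gc x - x| < δ) ∧ (∀ x, |deriv gc x - 1| < δ)

/-- `f` is isotopic to the identity on the closed annulus. -/
def IsotopicToIdCA (f : CAnn ≃ₜ CAnn) : Prop :=
  ∃ H : ℝ × CAnn → CAnn, ContinuousOn H (Set.Icc (0 : ℝ) 1 ×ˢ Set.univ) ∧
    (∀ z, H (0, z) = z) ∧ (∀ z, H (1, z) = f z) ∧
    ∀ t ∈ Set.Icc (0 : ℝ) 1, ∃ g : CAnn ≃ₜ CAnn, ∀ z, H (t, z) = g z

/-- The rotation set of a lift `fc` of a homeomorphism of the closed annulus. -/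
def rotCA (fc : (ℝ × I) ≃ₜ (ℝ × I)) : Set EReal :=
  {ρ | ∃ (z : ℕ → ℝ × I) (n : ℕ → ℕ), Tendsto n atTop atTop ∧
    Tendsto (fun k => (((((⇑fc)^[n k] (z k)).1 - (z k).1) / (n k) : ℝ) : EReal))
      atTop (nhds ρ)}

/-- Fibrewise increasing homeomorphism. -/
def fib {α β : Type*} [TopologicalSpace α] [TopologicalSpace β] [LinearOrder β] [OrderTopology β]
    (e : α → β → β) (hc : Continuous (fun p : α × β => e p.1 p.2))
    (hm : ∀ a, StrictMono (e a)) (hs : ∀ a, Function.Surjective (e a)) : (α × β) ≃ₜ (α × β) where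
  toFun p := (p.1, e p.1 p.2)
  invFun p := (p.1, Function.surjInv (hs p.1) p.2)
  left_inv p := by
    refine Prod.ext rfl ?_
    exact (hm p.1).injective (Function.surjInv_eq (hs p.1) _)
  right_inv p := by
    refine Prod.ext rfl ?_
    exact Function.surjInv_eq (hs p.1) _
  continuous_toFun := by fun_prop
  continuous_invFun := by
    refine continuous_fst.prodMk ?_
    rw [continuous_iff_lower_upperSemicontinuous, lowerSemicontinuous_iff_isOpen_preimage,
      upperSemicontinuous_iff_isOpen_preimage]
    refine ⟨fun q => ?_, fun q => ?_⟩
    · have : (fun p : α × β => Function.surjInv (hs p.1) p.2) ⁻¹' (Ioi q)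
          = {p : α × β | e p.1 q < p.2} := by
        ext p
        simp only [mem_preimage, mem_Ioi, mem_ofPred_eq]
        conv_rhs => rw [← Function.surjInv_eq (hs p.1) p.2]
        exact (hm p.1).lt_iff_lt.symm
      rw [this]
      exact isOpen_lt (hc.comp (continuous_fst.prodMk continuous_const)) continuous_snd
    · have : (fun p : α × β => Function.surjInv (hs p.1) p.2) ⁻¹' (Iio q)
          = {p : α × β | p.2 < e p.1 q} := by
        ext p
        simp only [mem_preimage, mem_Iio, mem_ofPred_eq]
        conv_rhs => rw [← Function.surjInv_eq (hs p.1) p.2]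
        exact (hm p.1).lt_iff_lt.symm
      rw [this]
      exact isOpen_lt continuous_snd (hc.comp (continuous_fst.prodMk continuous_const))

/-- Equivariance under the deck translation. -/
def Eqv (G : ℝ × I → ℝ × I) : Prop :=
  ∀ x y, G (x + 1, y) = ((G (x, y)).1 + 1, (G (x, y)).2)

theorem Eqv.int {G : ℝ × I → ℝ × I} (h : Eqv G) (x : ℝ) (y : I) (n : ℤ) :
    G (x + n, y) = ((G (x, y)).1 + n, (G (x, y)).2) := by
  induction n using Int.induction_on with
  | zero => simp
  | succ i ih =>
    have := h (x + (i : ℤ)) y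
    rw [ih] at this
    push_cast at this ⊢
    rw [← add_assoc, this, add_assoc]
  | pred i ih =>
    have := h (x + ((-(i : ℤ) - 1 : ℤ) : ℝ)) y
    have e : x + ((-(i : ℤ) - 1 : ℤ) : ℝ) + 1 = x + ((-(i : ℤ) : ℤ) : ℝ) := by push_cast; ring
    rw [e, ih] at this
    have h1 := congrArg Prod.fst this
    have h2 := congrArg Prod.snd this
    simp only at h1 h2
    refine Prod.ext ?_ h2.symm
    simp only
    push_cast at h1 ⊢
    linarith

theorem pCA_quot : IsOpenQuotientMap pCA :=
  (QuotientAddGroup.isOpenQuotientMap_mk (G := ℝ)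
    (N := AddSubgroup.zmultiples (1 : ℝ))).prodMap (IsOpenQuotientMap.id (X := I))

theorem pCA_eq_iff (z w : ℝ × I) : pCA z = pCA w ↔ ∃ n : ℤ, w.1 = z.1 + n ∧ w.2 = z.2 := by
  unfold pCA
  rw [Prod.mk.injEq]
  constructor
  · rintro ⟨h1, h2⟩
    have h3 : ((w.1 - z.1 : ℝ) : T1) = 0 := by
      rw [AddCircle.coe_sub, h1, sub_self]
    obtain ⟨n, hn⟩ := (AddCircle.coe_eq_zero_iff (1 : ℝ)).1 h3
    refine ⟨n, ?_, h2.symm⟩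
    simp at hn
    linarith
  · rintro ⟨n, h1, h2⟩
    refine ⟨?_, h2.symm⟩
    rw [h1, AddCircle.coe_add]
    have : ((n : ℝ) : T1) = 0 := (AddCircle.coe_eq_zero_iff (1 : ℝ)).2 ⟨n, by simp⟩
    rw [this, add_zero]

theorem Eqv.fibre {G : ℝ × I → ℝ × I} (h : Eqv G) {z w : ℝ × I} (e : pCA z = pCA w) :
    pCA (G z) = pCA (G w) := by
  obtain ⟨n, h1, h2⟩ := (pCA_eq_iff z w).1 e
  have : w = (z.1 + n, z.2) := Prod.ext h1 h2
  rw [this, h.int, pCA_eq_iff]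
  exact ⟨n, rfl, rfl⟩

theorem Eqv.symm {G : (ℝ × I) ≃ₜ (ℝ × I)} (h : Eqv G) : Eqv G.symm := by
  intro x y
  apply G.injective
  rw [G.apply_symm_apply, h, Prod.mk.eta, G.apply_symm_apply]

theorem Eqv.comp {G K : ℝ × I → ℝ × I} (hG : Eqv G) (hK : Eqv K) : Eqv (G ∘ K) := by
  intro x y
  simp only [Function.comp]
  rw [hK, hG]

/-- Descent to the annulus. -/
def descF (G : ℝ × I → ℝ × I) : CAnn → CAnn := fun z => pCA (G (Function.surjInv pCA_quot.surjective z))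

theorem descF_apply {G : ℝ × I → ℝ × I} (h : Eqv G) (z : ℝ × I) : descF G (pCA z) = pCA (G z) :=
  h.fibre (Function.surjInv_eq _ _)

theorem descF_cont {G : ℝ × I → ℝ × I} (h : Eqv G) (hc : Continuous G) : Continuous (descF G) := by
  rw [← pCA_quot.continuous_comp_iff]
  have : descF G ∘ pCA = pCA ∘ G := funext (descF_apply h)
  rw [this]
  exact pCA_quot.continuous.comp hc

def desc (G : (ℝ × I) ≃ₜ (ℝ × I)) (h : Eqv G) : CAnn ≃ₜ CAnn where
  toFun := descF G
  invFun := descF G.symm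
  left_inv z := by
    obtain ⟨w, rfl⟩ := pCA_quot.surjective z
    rw [descF_apply h, descF_apply h.symm, G.symm_apply_apply]
  right_inv z := by
    obtain ⟨w, rfl⟩ := pCA_quot.surjective z
    rw [descF_apply h.symm, descF_apply h, G.apply_symm_apply]
  continuous_toFun := descF_cont h G.continuous
  continuous_invFun := descF_cont h.symm G.symm.continuous

theorem desc_apply (G : (ℝ × I) ≃ₜ (ℝ × I)) (h : Eqv G) (z : ℝ × I) :
    desc G h (pCA z) = pCA (G z) := descF_apply h z

/-- Projection to the unit interval. -/
abbrev pj (y : ℝ) : I := Set.projIcc (0 : ℝ) 1 zero_le_one y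

theorem pj_cont : Continuous pj := continuous_projIcc

/-- Area preservation, tested on periodic continuous functions. -/
def LP (G : ℝ × I → ℝ × I) : Prop :=
  ∀ Φ : ℝ × I → ℝ, Continuous Φ → (∀ x y, Φ (x + 1, y) = Φ (x, y)) →
    ∫ y in (0 : ℝ)..1, ∫ x in (0 : ℝ)..1, Φ (G (x, pj y)) =
    ∫ y in (0 : ℝ)..1, ∫ x in (0 : ℝ)..1, Φ (x, pj y)

theorem integral_ann (k : CAnn → ℝ) (hk : Continuous k) :
    ∫ z, k z = ∫ y in (0 : ℝ)..1, ∫ x in (0 : ℝ)..1, k (pCA (x, pj y)) := by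
  have hi : Integrable k (volume : Measure CAnn) := by
    have := (hk.continuousOn (s := Set.univ)).integrableOn_compact (μ := (volume : Measure CAnn)) isCompact_univ
    simpa using this
  have h1 : ∫ z, k z = ∫ y : I, ∫ x : T1, k (x, y) := by
    rw [MeasureTheory.Measure.volume_eq_prod] at hi ⊢
    exact integral_prod_symm k hi
  rw [h1]
  have h2 : ∀ y : I, ∫ x : T1, k (x, y) = ∫ x in (0 : ℝ)..1, k (pCA (x, pj y)) := by
    intro y
    have := AddCircle.intervalIntegral_preimage (1 : ℝ) 0 (fun x => k (x, y))
    rw [← this]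
    simp [pCA, pj, Set.projIcc_val]
  have h3 := integral_subtype (s := I) measurableSet_Icc (fun y : ℝ => ∫ x in (0 : ℝ)..1, k (pCA (x, pj y)))
  rw [intervalIntegral.integral_of_le zero_le_one, ← integral_Icc_eq_integral_Ioc, ← h3]
  exact integral_congr_ae (Eventually.of_forall h2)

theorem desc_measure (G : (ℝ × I) ≃ₜ (ℝ × I)) (h : Eqv G) (hL : LP G) :
    Measure.map (desc G h) (volume : Measure CAnn) = volume := by
  have : IsFiniteMeasure (volume : Measure T1) := inferInstance
  have hm : Measurable (desc G h) := (desc G h).continuous.measurable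
  have : IsFiniteMeasure (Measure.map (desc G h) (volume : Measure CAnn)) := inferInstance
  apply ext_of_forall_integral_eq_of_IsFiniteMeasure
  intro k
  rw [integral_map hm.aemeasurable k.continuous.aestronglyMeasurable,
    integral_ann (fun z => k (desc G h z)) (k.continuous.comp (desc G h).continuous), integral_ann _ k.continuous]
  simp only [desc_apply]
  refine hL (fun z => k (pCA z)) (k.continuous.comp pCA_quot.continuous) ?_
  intro x y
  congr 1
  rw [pCA_eq_iff]
  exact ⟨-1, by simp, rfl⟩

theorem LP.comp {G K : ℝ × I → ℝ × I} (hG : LP G) (hK : LP K) (hc : Continuous G) (he : Eqv G) :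
    LP (G ∘ K) := by
  intro Φ hΦ hp
  have := hK (Φ ∘ G) (hΦ.comp hc) (by intro x y; simp only [Function.comp]; rw [he, hp])
  simp only [Function.comp] at this ⊢
  rw [this, hG Φ hΦ hp]

/-- The shear. -/
def shear (κ : ℝ → ℝ) (hκ : Continuous κ) : (ℝ × I) ≃ₜ (ℝ × I) where
  toFun z := (z.1 + κ z.2, z.2)
  invFun z := (z.1 - κ z.2, z.2)
  left_inv z := by simp
  right_inv z := by simp
  continuous_toFun := by fun_prop
  continuous_invFun := by fun_prop

theorem shear_eqv (κ : ℝ → ℝ) (hκ : Continuous κ) : Eqv (shear κ hκ) := by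
  intro x y
  simp only [shear, Homeomorph.homeomorph_mk_coe, Equiv.coe_fn_mk]
  refine Prod.ext ?_ rfl
  simp only
  ring

theorem LP_trans (G : ℝ × I → ℝ × I) (κ : ℝ → ℝ) (hG : ∀ x y, G (x, y) = (x + κ y, y)) : LP G := by
  intro Φ hΦ hp
  refine intervalIntegral.integral_congr ?_
  intro y _
  simp only [hG]
  rw [intervalIntegral.integral_comp_add_right (fun x => Φ (x, pj y))]
  have hper : Function.Periodic (fun x => Φ (x, pj y)) 1 := fun x => hp x _
  have := hper.intervalIntegral_add_eq (κ (pj y)) 0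
  simp only [zero_add] at this ⊢
  rw [add_comm, this]

/-- Generating data: `P = ∂_Y S`, `Q = ∂_x S`, `W = ∂_x ∂_Y S`. -/
structure GD (P Q W : ℝ → ℝ → ℝ) : Prop where
  cP : Continuous (fun p : ℝ × ℝ => P p.1 p.2)
  cQ : Continuous (fun p : ℝ × ℝ => Q p.1 p.2)
  cW : Continuous (fun p : ℝ × ℝ => W p.1 p.2)
  dP : ∀ x Y, HasDerivAt (fun x => P x Y) (W x Y) x
  dQ : ∀ x Y, HasDerivAt (fun Y => Q x Y) (W x Y) Y
  bW : ∀ x, ∀ Y ∈ Icc (0 : ℝ) 1, |W x Y| ≤ 1 / 2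
  bP : ∀ x, ∀ Y ∈ Icc (0 : ℝ) 1, |P x Y| ≤ 1
  pP : ∀ x Y, P (x + 1) Y = P x Y
  pQ : ∀ x Y, Q (x + 1) Y = Q x Y
  Q0 : ∀ x, Q x 0 = 0
  Q1 : ∀ x, Q x 1 = 0

namespace GD
variable {P Q W : ℝ → ℝ → ℝ}

theorem vm (g : GD P Q W) (c : I) (x : ℝ) : StrictMonoOn (fun Y : ℝ => Y + c * Q x Y) (Icc 0 1) := by
  have hd : ∀ Y, HasDerivAt (fun Y : ℝ => Y + c * Q x Y) (1 + c * W x Y) Y := fun Y =>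
    (hasDerivAt_id Y).add ((g.dQ x Y).const_mul (c : ℝ))
  refine strictMonoOn_of_deriv_pos (convex_Icc 0 1)
    (fun Y _ => (hd Y).continuousAt.continuousWithinAt) ?_
  intro Y hY
  rw [(hd Y).deriv]
  have h1 := abs_le.1 (g.bW x Y (interior_subset hY))
  have h2 := c.2.1
  have h3 := c.2.2
  nlinarith

theorem hm (g : GD P Q W) (c : I) (Y : I) : StrictMono (fun x : ℝ => x + c * P x Y) := by
  have hd : ∀ x, HasDerivAt (fun x : ℝ => x + c * P x Y) (1 + c * W x Y) x := fun x =>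
    (hasDerivAt_id x).add ((g.dP x Y).const_mul (c : ℝ))
  refine strictMono_of_deriv_pos ?_
  intro x
  rw [(hd x).deriv]
  have h1 := abs_le.1 (g.bW x Y Y.2)
  have h2 := c.2.1
  have h3 := c.2.2
  nlinarith

theorem vmem (g : GD P Q W) (c : I) (x : ℝ) (Y : I) : (Y : ℝ) + c * Q x Y ∈ Icc (0 : ℝ) 1 := by
  have h := (g.vm c x).monotoneOn
  have h0 := h (left_mem_Icc.2 zero_le_one) Y.2 Y.2.1
  have h1 := h Y.2 (right_mem_Icc.2 zero_le_one) Y.2.2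
  simp only [g.Q0, g.Q1, mul_zero, add_zero] at h0 h1
  exact ⟨h0, h1⟩

/-- The vertical fibre map. -/
def ve (g : GD P Q W) (c : I) (x : ℝ) (Y : I) : I := ⟨(Y : ℝ) + c * Q x Y, g.vmem c x Y⟩

theorem ve_cont (g : GD P Q W) : Continuous (fun p : (I × ℝ) × I => g.ve p.1.1 p.1.2 p.2) := by
  have := g.cQ
  refine Continuous.subtype_mk ?_ _
  have h2 : Continuous (fun p : (I × ℝ) × I => Q p.1.2 p.2) :=
    g.cQ.comp ((continuous_snd.comp continuous_fst).prodMk (continuous_subtype_val.comp continuous_snd))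
  fun_prop

theorem ve_mono (g : GD P Q W) (c : I) (x : ℝ) : StrictMono (g.ve c x) := fun Y Y' h =>
  Subtype.mk_lt_mk.2 (g.vm c x Y.2 Y'.2 h)

theorem ve_surj (g : GD P Q W) (c : I) (x : ℝ) : Function.Surjective (g.ve c x) := by
  intro y
  have hc : ContinuousOn (fun Y : ℝ => Y + c * Q x Y) (Icc 0 1) := by
    have : Continuous (fun Y : ℝ => Q x Y) := g.cQ.comp (continuous_const.prodMk continuous_id)
    fun_prop
  have := intermediate_value_Icc (zero_le_one (α := ℝ)) hc
  simp only [g.Q0, g.Q1, mul_zero, add_zero] at this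
  obtain ⟨Y, hY, h⟩ := this y.2
  exact ⟨⟨Y, hY⟩, Subtype.ext h⟩

/-- The vertical homeomorphism. -/
def V (g : GD P Q W) (c : I) : (ℝ × I) ≃ₜ (ℝ × I) :=
  fib (g.ve c) (g.ve_cont.comp
    ((continuous_const.prodMk continuous_fst).prodMk continuous_snd : Continuous fun p : ℝ × I => ((c, p.1), p.2)))
    (g.ve_mono c) (g.ve_surj c)

/-- The vertical homeomorphism with parameter. -/
def VV (g : GD P Q W) : ((I × ℝ) × I) ≃ₜ ((I × ℝ) × I) :=
  fib (fun a => g.ve a.1 a.2) g.ve_cont (fun a => g.ve_mono a.1 a.2) (fun a => g.ve_surj a.1 a.2)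

theorem V_apply (g : GD P Q W) (c : I) (x : ℝ) (Y : I) : g.V c (x, Y) = (x, g.ve c x Y) := rfl

theorem V_symm (g : GD P Q W) (c : I) (z : ℝ × I) :
    (g.V c).symm z = (z.1, (g.VV.symm ((c, z.1), z.2)).2) := rfl

theorem he_cont (g : GD P Q W) (c : I) : Continuous (fun p : I × ℝ => p.2 + c * P p.2 p.1) := by
  have h2 : Continuous (fun p : I × ℝ => P p.2 p.1) :=
    g.cP.comp (continuous_snd.prodMk (continuous_subtype_val.comp continuous_fst))
  exact continuous_snd.add (continuous_const.mul h2)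

theorem he_surj (g : GD P Q W) (c : I) (Y : I) : Function.Surjective (fun x : ℝ => x + c * P x Y) := by
  intro X
  have hc : ContinuousOn (fun x : ℝ => x + c * P x Y) (Icc (X - 1) (X + 1)) :=
    ((g.he_cont c).comp (continuous_const.prodMk continuous_id : Continuous fun x : ℝ => (Y, x))).continuousOn
  have := intermediate_value_Icc (by linarith : X - 1 ≤ X + 1) hc
  have hb : ∀ x, |c * P x Y| ≤ 1 := fun x => by
    rw [abs_mul, abs_of_nonneg c.2.1]
    have := g.bP x Y Y.2
    have h3 := c.2.2
    have h2 := c.2.1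
    have := abs_nonneg (P x Y)
    nlinarith
  obtain ⟨x, -, h⟩ := this (a := X)
    ⟨by linarith [(abs_le.1 (hb (X - 1))).2], by linarith [(abs_le.1 (hb (X + 1))).1]⟩
  exact ⟨x, h⟩

/-- The horizontal homeomorphism. -/
def Hh (g : GD P Q W) (c : I) : (ℝ × I) ≃ₜ (ℝ × I) :=
  ((Homeomorph.prodComm ℝ I).trans
    (fib (fun (Y : I) (x : ℝ) => x + c * P x Y) (g.he_cont c) (g.hm c) (g.he_surj c))).trans
    (Homeomorph.prodComm I ℝ)

theorem Hh_apply (g : GD P Q W) (c : I) (z : ℝ × I) : g.Hh c z = (z.1 + c * P z.1 z.2, z.2) := rfl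

/-- The generated homeomorphism. -/
def F (g : GD P Q W) (c : I) : (ℝ × I) ≃ₜ (ℝ × I) := (g.V c).symm.trans (g.Hh c)

theorem F_V (g : GD P Q W) (c : I) (x : ℝ) (Y : I) :
    g.F c (g.V c (x, Y)) = (x + c * P x Y, Y) := by
  simp [F, Hh_apply]

theorem F_cont (g : GD P Q W) : Continuous (fun q : I × (ℝ × I) => g.F q.1 q.2) := by
  have h1 : Continuous (fun q : I × (ℝ × I) => (g.VV.symm ((q.1, q.2.1), q.2.2)).2) :=
    continuous_snd.comp (g.VV.symm.continuous.comp (by fun_prop))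
  have h2 : Continuous (fun q : I × (ℝ × I) => P q.2.1 (g.VV.symm ((q.1, q.2.1), q.2.2)).2) :=
    g.cP.comp ((continuous_fst.comp continuous_snd).prodMk (continuous_subtype_val.comp h1))
  have : (fun q : I × (ℝ × I) => g.F q.1 q.2) = fun q =>
    (q.2.1 + q.1 * P q.2.1 (g.VV.symm ((q.1, q.2.1), q.2.2)).2, (g.VV.symm ((q.1, q.2.1), q.2.2)).2) := by
    funext q
    simp [F, Hh_apply, V_symm]
  rw [this]
  exact ((continuous_fst.comp continuous_snd).add
    ((continuous_subtype_val.comp continuous_fst).mul h2)).prodMk h1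

theorem V_eqv (g : GD P Q W) (c : I) : Eqv (g.V c) := by
  intro x Y
  rw [V_apply, V_apply]
  refine Prod.ext rfl (Subtype.ext ?_)
  simp [ve, g.pQ]

theorem F_eqv (g : GD P Q W) (c : I) : Eqv (g.F c) := by
  have : Eqv (g.Hh c) := by
    intro x Y
    rw [Hh_apply, Hh_apply]
    refine Prod.ext ?_ rfl
    simp only [g.pP]
    ring
  exact this.comp (g.V_eqv c).symm

theorem F_zero (g : GD P Q W) (z : ℝ × I) : g.F 0 z = z := by
  have := g.F_V 0 z.1 z.2
  have h : g.V 0 (z.1, z.2) = z := by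
    rw [V_apply]
    refine Prod.ext rfl (Subtype.ext ?_)
    simp [ve]
  rw [h] at this
  rw [this]
  simp

theorem pj_of_mem {y : ℝ} (h : y ∈ Icc (0 : ℝ) 1) : (pj y : ℝ) = y := by
  simp [pj, Set.projIcc_of_mem zero_le_one h]

theorem F_LP (g : GD P Q W) : LP (g.F 1) := by
  intro Φ hΦ hp
  have hF := (g.F 1).continuous
  have cQ := g.cQ
  have cP := g.cP
  have cW := g.cW
  have hpj := pj_cont
  have hK : Continuous (fun p : ℝ × ℝ => Φ (g.F 1 (p.1, pj p.2))) :=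
    hΦ.comp (hF.comp (by fun_prop))
  have hR : Continuous (fun p : ℝ × ℝ => Φ (p.1 + P p.1 p.2, pj p.2) * (1 + W p.1 p.2)) := by
    have : Continuous (fun p : ℝ × ℝ => Φ (p.1 + P p.1 p.2, pj p.2)) := hΦ.comp (by fun_prop)
    fun_prop
  have swap : ∀ K : ℝ → ℝ → ℝ, Continuous (fun p : ℝ × ℝ => K p.1 p.2) →
      ∫ y in (0 : ℝ)..1, ∫ x in (0 : ℝ)..1, K x y = ∫ x in (0 : ℝ)..1, ∫ y in (0 : ℝ)..1, K x y := by
    intro K hK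
    refine (intervalIntegral_intervalIntegral_swap ?_).symm
    refine IntegrableOn.mono_set (hK.continuousOn.integrableOn_compact
      (isCompact_uIcc.prod isCompact_uIcc)) (Set.prod_mono uIoc_subset_uIcc uIoc_subset_uIcc)
  rw [swap (fun x y => Φ (g.F 1 (x, pj y))) hK]
  have step1 : ∀ x : ℝ, ∫ y in (0 : ℝ)..1, Φ (g.F 1 (x, pj y)) =
      ∫ y in (0 : ℝ)..1, Φ (x + P x y, pj y) * (1 + W x y) := by
    intro x
    have hd : ∀ Y, HasDerivAt (fun Y : ℝ => Y + Q x Y) (1 + W x Y) Y := fun Y =>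
      (hasDerivAt_id Y).add (g.dQ x Y)
    have h := intervalIntegral.integral_comp_mul_deriv (a := 0) (b := 1)
      (f := fun Y : ℝ => Y + Q x Y) (f' := fun Y => 1 + W x Y)
      (g := fun y => Φ (g.F 1 (x, pj y))) (fun Y _ => hd Y)
      (by
        have : Continuous (fun Y => W x Y) := cW.comp (continuous_const.prodMk continuous_id)
        fun_prop)
      (hK.comp (continuous_const.prodMk continuous_id))
    simp only [g.Q0, g.Q1, add_zero, Function.comp] at h
    rw [← h]
    refine intervalIntegral.integral_congr ?_
    intro Y hY
    rw [uIcc_of_le zero_le_one] at hY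
    simp only
    congr 2
    have h1 := g.F_V 1 x (pj Y)
    have h2 : g.V 1 (x, pj Y) = (x, pj (Y + Q x Y)) := by
      rw [V_apply]
      refine Prod.ext rfl (Subtype.ext ?_)
      have := g.vmem 1 x ⟨Y, hY⟩
      simp only [Icc.coe_one, one_mul] at this
      rw [pj_of_mem this]
      simp only [ve, Icc.coe_one, one_mul]
      rw [pj_of_mem hY]
    rw [h2] at h1
    rw [h1, pj_of_mem hY]
    simp
  simp_rw [step1]
  rw [← swap (fun x y => Φ (x + P x y, pj y) * (1 + W x y)) hR]
  refine intervalIntegral.integral_congr ?_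
  intro Y hY
  simp only
  have hd : ∀ x, HasDerivAt (fun x : ℝ => x + P x Y) (1 + W x Y) x := fun x =>
    (hasDerivAt_id x).add (g.dP x Y)
  have h := intervalIntegral.integral_comp_mul_deriv (a := 0) (b := 1)
      (f := fun x : ℝ => x + P x Y) (f' := fun x => 1 + W x Y)
      (g := fun x => Φ (x, pj Y)) (fun x _ => hd x)
      (by
        have : Continuous (fun x => W x Y) := cW.comp (continuous_id.prodMk continuous_const)
        fun_prop)
      (by fun_prop)
  simp only [Function.comp] at h
  rw [h]
  have hper : Function.Periodic (fun x => Φ (x, pj Y)) 1 := fun x => hp x _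
  have h3 := hper.intervalIntegral_add_eq (0 + P 0 Y) 0
  have h4 : (1 : ℝ) + P 1 Y = 0 + P 0 Y + 1 := by
    have := g.pP 0 Y
    rw [zero_add] at this
    rw [this]; ring
  rw [h4, h3, zero_add]

end GD

theorem hasDerivAt_maxsq (t : ℝ) : HasDerivAt (fun t : ℝ => (max t 0) ^ 2) (2 * max t 0) t := by
  rcases lt_trichotomy t 0 with h | h | h
  · have : (fun t : ℝ => (max t 0) ^ 2) =ᶠ[𝓝 t] fun _ => (0 : ℝ) := by
      filter_upwards [Iio_mem_nhds h] with s hs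
      rw [max_eq_right (le_of_lt hs)]; simp
    rw [max_eq_right h.le, mul_zero]
    exact (hasDerivAt_const t (0 : ℝ)).congr_of_eventuallyEq this
  · subst h
    rw [max_self, mul_zero]
    rw [hasDerivAt_iff_isLittleO_nhds_zero]
    simp only [zero_add, max_self, smul_zero, sub_zero]
    have h1 : (fun h : ℝ => (max h 0) ^ 2 - 0 ^ 2) =O[𝓝 0] fun h : ℝ => h ^ 2 := by
      refine Asymptotics.isBigO_of_le _ ?_
      intro h
      rw [Real.norm_eq_abs, Real.norm_eq_abs]
      rcases le_total h 0 with h0 | h0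
      · rw [max_eq_right h0]; simp; positivity
      · rw [max_eq_left h0]; simp
    exact h1.trans_isLittleO (by simpa using Asymptotics.isLittleO_pow_id (𝕜 := ℝ) one_lt_two)
  · have : (fun t : ℝ => (max t 0) ^ 2) =ᶠ[𝓝 t] fun t => t ^ 2 := by
      filter_upwards [Ioi_mem_nhds h] with s hs
      rw [max_eq_left (le_of_lt hs)]
    rw [max_eq_left h.le]
    refine HasDerivAt.congr_of_eventuallyEq ?_ this
    simpa using hasDerivAt_pow 2 t

def ph (Y : ℝ) : ℝ := Y * (max (1 - 4 * Y) 0) ^ 2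
def ph' (Y : ℝ) : ℝ := (max (1 - 4 * Y) 0) ^ 2 - 8 * Y * max (1 - 4 * Y) 0
def ch (Y : ℝ) : ℝ := 1 - (max (1 - 16 * (max (Y - 1 / 8) 0) ^ 2) 0) ^ 2
def ch' (Y : ℝ) : ℝ := 64 * max (1 - 16 * (max (Y - 1 / 8) 0) ^ 2) 0 * max (Y - 1 / 8) 0

theorem ph_deriv (Y : ℝ) : HasDerivAt ph (ph' Y) Y := by
  have h1 : HasDerivAt (fun Y : ℝ => 1 - 4 * Y) (-4) Y := by
    simpa using ((hasDerivAt_id Y).const_mul 4).const_sub 1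
  have h2 := (hasDerivAt_maxsq (1 - 4 * Y)).comp Y h1
  have h3 := (hasDerivAt_id Y).mul h2
  refine h3.congr_deriv ?_
  simp [ph', Function.comp]; ring

theorem ch_deriv (Y : ℝ) : HasDerivAt ch (ch' Y) Y := by
  have h1 : HasDerivAt (fun Y : ℝ => Y - 1 / 8) 1 Y := (hasDerivAt_id Y).sub_const _
  have h2 := (hasDerivAt_maxsq (Y - 1 / 8)).comp Y h1
  have h3 := (h2.const_mul 16).const_sub 1
  have h4 := (hasDerivAt_maxsq (1 - 16 * (max (Y - 1 / 8) 0) ^ 2)).comp Y h3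
  have h5 := h4.const_sub 1
  refine h5.congr_deriv ?_
  simp [ch']; ring

theorem ph_cont : Continuous ph := by unfold ph; fun_prop
theorem ph'_cont : Continuous ph' := by unfold ph'; fun_prop
theorem ch_cont : Continuous ch := by unfold ch; fun_prop
theorem ch'_cont : Continuous ch' := by unfold ch'; fun_prop

theorem ph_zero : ph 0 = 0 := by simp [ph]
theorem ph'_zero : ph' 0 = 1 := by simp [ph']
theorem ph_hi {Y : ℝ} (h : 1 / 4 ≤ Y) : ph Y = 0 := by
  rw [ph, max_eq_right (by linarith)]; simp
theorem ph'_hi {Y : ℝ} (h : 1 / 4 ≤ Y) : ph' Y = 0 := by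
  rw [ph', max_eq_right (by linarith)]; simp
theorem ph_pos {Y : ℝ} (h0 : 0 < Y) (h : Y < 1 / 4) : 0 < ph Y := by
  rw [ph, max_eq_left (by linarith)]
  have : 0 < 1 - 4 * Y := by linarith
  positivity
theorem ph_nonneg {Y : ℝ} (h0 : 0 ≤ Y) : 0 ≤ ph Y := by
  rw [ph]; positivity
theorem ph_le {Y : ℝ} (h0 : 0 ≤ Y) (h : Y ≤ 1 / 4) : ph Y ≤ 1 / 4 - Y := by
  rw [ph, max_eq_left (by linarith)]
  have h1 : 0 ≤ 1 - 4 * Y := by linarith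
  have h2 : Y * (1 - 4 * Y) ≤ 1 / 4 := by nlinarith
  nlinarith
theorem ph_le_one {Y : ℝ} (h0 : 0 ≤ Y) : ph Y ≤ 1 := by
  rcases le_total Y (1 / 4) with h | h
  · linarith [ph_le h0 h]
  · rw [ph_hi h]; norm_num
theorem ph'_abs {Y : ℝ} (h0 : 0 ≤ Y) : |ph' Y| ≤ 1 := by
  rcases le_total Y (1 / 4) with h | h
  · rw [ph', max_eq_left (by linarith), abs_le]
    constructor <;> nlinarith
  · rw [ph'_hi h]; norm_num
theorem ph'_neg {Y : ℝ} (h0 : 1 / 12 < Y) (h : Y < 1 / 4) : ph' Y < 0 := by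
  rw [ph', max_eq_left (by linarith)]
  nlinarith
theorem ch_lo {Y : ℝ} (h : Y ≤ 1 / 8) : ch Y = 0 := by
  rw [ch, max_eq_right (a := Y - 1 / 8) (by linarith)]; simp
theorem ch'_lo {Y : ℝ} (h : Y ≤ 1 / 8) : ch' Y = 0 := by
  rw [ch', max_eq_right (a := Y - 1 / 8) (by linarith)]; simp
theorem ch_hi {Y : ℝ} (h : 3 / 8 ≤ Y) : ch Y = 1 := by
  rw [ch, max_eq_left (a := Y - 1 / 8) (by linarith), max_eq_right (by nlinarith)]; simp
theorem ch'_hi {Y : ℝ} (h : 3 / 8 ≤ Y) : ch' Y = 0 := by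
  rw [ch', max_eq_left (a := Y - 1 / 8) (by linarith), max_eq_right (by nlinarith)]; simp
theorem ch_mem (Y : ℝ) : 0 ≤ ch Y ∧ ch Y ≤ 1 := by
  rw [ch]
  have h1 : 0 ≤ max (1 - 16 * (max (Y - 1 / 8) 0) ^ 2) 0 := le_max_right _ _
  have h2 : max (1 - 16 * (max (Y - 1 / 8) 0) ^ 2) 0 ≤ 1 :=
    max_le (by nlinarith [sq_nonneg (max (Y - 1 / 8) 0)]) zero_le_one
  constructor <;> nlinarith
theorem ch_pos {Y : ℝ} (h : 1 / 8 < Y) : 0 < ch Y := by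
  rcases le_total (3 / 8) Y with h3 | h3
  · rw [ch_hi h3]; norm_num
  rw [ch, max_eq_left (a := Y - 1 / 8) (by linarith), max_eq_left (by nlinarith)]
  have h1 : 0 < (Y - 1 / 8) ^ 2 := by nlinarith
  have h2 : (Y - 1 / 8) ^ 2 ≤ 1 / 16 := by nlinarith
  generalize (Y - 1 / 8) ^ 2 = q at h1 h2
  have h4 : 0 < 32 * q * (1 - 8 * q) := by
    have : 0 < 1 - 8 * q := by linarith
    positivity
  linarith
theorem ch'_nonneg (Y : ℝ) : 0 ≤ ch' Y := by
  rw [ch']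
  have := le_max_right (1 - 16 * (max (Y - 1 / 8) 0) ^ 2) 0
  have := le_max_right (Y - 1 / 8) 0
  positivity
theorem ch'_le (Y : ℝ) : ch' Y ≤ 64 := by
  rcases le_total Y (1 / 8) with h | h
  · rw [ch'_lo h]; norm_num
  rcases le_total (3 / 8) Y with h3 | h3
  · rw [ch'_hi h3]; norm_num
  rw [ch', max_eq_left (a := Y - 1 / 8) (by linarith), max_eq_left (by nlinarith)]
  have h1 : 0 ≤ Y - 1 / 8 := by linarith
  have h2 : Y - 1 / 8 ≤ 1 / 4 := by linarith
  have h3 : 1 - 16 * (Y - 1 / 8) ^ 2 ≤ 1 := by nlinarith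
  nlinarith
theorem ch'_pos {Y : ℝ} (h : 1 / 8 < Y) (h' : Y < 3 / 8) : 0 < ch' Y := by
  rw [ch', max_eq_left (a := Y - 1 / 8) (by linarith), max_eq_left (by nlinarith)]
  have h1 : 0 < Y - 1 / 8 := by linarith
  have h2 : 0 < 1 - 16 * (Y - 1 / 8) ^ 2 := by nlinarith
  positivity

theorem half_ne {u v s c Y ν : ℝ} (hν : 0 < ν) (h0 : 0 ≤ Y) (hu : u ≠ 0) (hv : v ≠ 0)
    (hc : c ≠ 0) (h : 0 < v * c ∨ u * s < 0) :
    v * ph Y + ν * c * ch Y ≠ 0 ∨ u * ph' Y + ν * s * ch' Y ≠ 0 := by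
  rcases h0.eq_or_lt with rfl | h0
  · right
    rw [ph'_zero, ch'_lo (by norm_num)]
    simpa using hu
  rcases h with h | h
  · left
    intro h1
    have h2 : (v * c) * ph Y + ν * c ^ 2 * ch Y = 0 := by linear_combination c * h1
    have h3 : 0 < ν * c ^ 2 := by positivity
    have h4 := ph_nonneg h0.le
    have h5 := (ch_mem Y).1
    rcases lt_or_ge Y (1 / 4) with h6 | h6
    · have := mul_pos h (ph_pos h0 h6)
      have := mul_nonneg h3.le h5
      linarith
    · have := mul_nonneg h.le h4
      have := mul_pos h3 (ch_pos (by linarith : 1 / 8 < Y))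
      linarith
  · rcases le_or_gt Y (1 / 8) with h6 | h6
    · left
      rw [ch_lo h6]
      have := ph_pos h0 (by linarith)
      simp [hv, this.ne']
    rcases lt_or_ge Y (1 / 4) with h7 | h7
    · right
      intro h1
      have h2 : u ^ 2 * ph' Y + ν * (u * s) * ch' Y = 0 := by linear_combination u * h1
      have h3 : u ^ 2 * ph' Y < 0 := mul_neg_of_pos_of_neg (by positivity) (ph'_neg (by linarith) h7)
      have h4 : ν * (u * s) * ch' Y ≤ 0 :=
        mul_nonpos_of_nonpos_of_nonneg (mul_neg_of_pos_of_neg hν h).le (ch'_nonneg Y)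
      linarith
    · left
      rw [ph_hi h7]
      have := ch_pos h6
      simp [hc, hν.ne', this.ne']

theorem back {u v : ℝ → ℝ} (hd : ∀ x, HasDerivAt u (v x) x) {a r : ℝ} (har : a < r)
    (ha : u a = 0) (hr : 0 < u r) : ∃ p ∈ Ioo a r, 0 < u p ∧ 0 < v p := by
  have h1 : ∀ x, HasDerivAt (fun x => (max (u x) 0) ^ 2) (2 * max (u x) 0 * v x) x := fun x =>
    (hasDerivAt_maxsq (u x)).comp x (hd x)
  obtain ⟨p, hp, h⟩ := exists_hasDerivAt_eq_slope _ _ har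
    (fun x _ => (h1 x).continuousAt.continuousWithinAt) (fun x _ => h1 x)
  refine ⟨p, hp, ?_⟩
  simp only [ha, max_self, max_eq_left hr.le] at h
  have h2 : 0 < 2 * max (u p) 0 * v p := by
    rw [h]
    exact div_pos (by simp; positivity) (by linarith)
  have h3 : 0 < u p := by
    by_contra h4
    rw [max_eq_right (not_lt.1 h4)] at h2
    simp at h2
  rw [max_eq_left h3.le] at h2
  exact ⟨h3, by by_contra h4; nlinarith [not_lt.1 h4]⟩

theorem fwd {u v : ℝ → ℝ} (hd : ∀ x, HasDerivAt u (v x) x) {a r : ℝ} (har : r < a)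
    (ha : u a = 0) (hr : 0 < u r) : ∃ p ∈ Ioo r a, 0 < u p ∧ v p < 0 := by
  have hd' : ∀ x, HasDerivAt (fun x => u (-x)) (-v (-x)) x := fun x => by
    have := (hd (-x)).comp x (hasDerivAt_neg x)
    exact this.congr_deriv (by ring)
  obtain ⟨p, hp, h1, h2⟩ := back hd' (neg_lt_neg har) (by simpa using ha) (by simpa using hr)
  exact ⟨-p, ⟨by linarith [hp.2], by linarith [hp.1]⟩, h1, by linarith⟩

theorem exists_good {u v : ℝ → ℝ} (hd : ∀ x, HasDerivAt u (v x) x) (h0 : u 0 = 0)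
    (hp : ∀ x, u (x + 1) = u x) (hne : ∃ x, u x ≠ 0) :
    ∃ p, u p ≠ 0 ∧ v p ≠ 0 ∧ Real.cos (2 * Real.pi * p) ≠ 0 ∧
      (0 < v p * Real.cos (2 * Real.pi * p) ∨ u p * Real.sin (2 * Real.pi * p) < 0) := by
  by_contra hcon
  have hno : ∀ p, u p ≠ 0 → v p ≠ 0 → Real.cos (2 * Real.pi * p) ≠ 0 →
      v p * Real.cos (2 * Real.pi * p) ≤ 0 ∧ 0 ≤ u p * Real.sin (2 * Real.pi * p) := by
    intro p a b c
    by_contra h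
    apply hcon
    refine ⟨p, a, b, c, ?_⟩
    by_contra h'
    push Not at h'
    exact h h'
  clear hcon
  have hpi := Real.pi_pos
  have hd' : ∀ x, HasDerivAt (fun x => -u x) (-v x) x := fun x => (hd x).neg
  have h1 : u 1 = 0 := by have := hp 0; rwa [zero_add, h0] at this
  have s1 : ∀ x ∈ Ioo (0 : ℝ) (1 / 2), 0 < Real.sin (2 * Real.pi * x) := fun x hx =>
    Real.sin_pos_of_pos_of_lt_pi (by nlinarith [hx.1]) (by nlinarith [hx.2])
  have s2 : ∀ x ∈ Ioo (1 / 2 : ℝ) 1, Real.sin (2 * Real.pi * x) < 0 := fun x hx => by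
    rw [← Real.sin_sub_two_pi]
    exact Real.sin_neg_of_neg_of_neg_pi_lt (by nlinarith [hx.2]) (by nlinarith [hx.1])
  have c1 : ∀ x ∈ Ioo (0 : ℝ) (1 / 4), 0 < Real.cos (2 * Real.pi * x) := fun x hx =>
    Real.cos_pos_of_mem_Ioo ⟨by nlinarith [hx.1], by nlinarith [hx.2]⟩
  have c2 : ∀ x ∈ Ioo (1 / 4 : ℝ) (3 / 4), Real.cos (2 * Real.pi * x) < 0 := fun x hx =>
    Real.cos_neg_of_pi_div_two_lt_of_lt (by nlinarith [hx.1]) (by nlinarith [hx.2])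
  have c3 : ∀ x ∈ Ioo (3 / 4 : ℝ) 1, 0 < Real.cos (2 * Real.pi * x) := fun x hx => by
    rw [← Real.cos_sub_two_pi]
    exact Real.cos_pos_of_mem_Ioo ⟨by nlinarith [hx.1], by nlinarith [hx.2]⟩
  -- first quarter
  have q1 : ∀ r, 0 < r → r ≤ 1 / 4 → u r = 0 := by
    intro r hr hr'
    by_contra hne
    rcases lt_or_gt_of_ne hne with h | h
    · obtain ⟨p, hp, a, b⟩ := back hd' hr (by simpa using h0) (by simpa using h)
      have hs := s1 p ⟨hp.1, by linarith [hp.2]⟩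
      have hc := c1 p ⟨hp.1, by linarith [hp.2]⟩
      have := (hno p (by linarith) (by linarith) hc.ne').2
      nlinarith
    · obtain ⟨p, hp, a, b⟩ := back hd hr h0 h
      have hc := c1 p ⟨hp.1, by linarith [hp.2]⟩
      have := (hno p (by linarith) (by linarith) hc.ne').1
      nlinarith
  have q4 : ∀ r, 3 / 4 ≤ r → r < 1 → u r = 0 := by
    intro r hr hr'
    by_contra hne
    rcases lt_or_gt_of_ne hne with h | h
    · obtain ⟨p, hp, a, b⟩ := fwd hd' hr' (by simpa using h1) (by simpa using h)
      have hc := c3 p ⟨by linarith [hp.1], hp.2⟩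
      have := (hno p (by linarith) (by linarith) hc.ne').1
      nlinarith
    · obtain ⟨p, hp, a, b⟩ := fwd hd hr' h1 h
      have hs := s2 p ⟨by linarith [hp.1], hp.2⟩
      have hc := c3 p ⟨by linarith [hp.1], hp.2⟩
      have := (hno p (by linarith) (by linarith) hc.ne').2
      nlinarith
  have h14 : u (1 / 4) = 0 := q1 _ (by norm_num) le_rfl
  have h34 : u (3 / 4) = 0 := q4 _ le_rfl (by norm_num)
  have q2 : ∀ r, 1 / 4 < r → r ≤ 1 / 2 → 0 ≤ u r := by
    intro r hr hr'
    by_contra h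
    obtain ⟨p, hp, a, b⟩ := back hd' hr (by simpa using h14) (by simpa using h)
    have hs := s1 p ⟨by linarith [hp.1], by linarith [hp.2]⟩
    have hc := c2 p ⟨hp.1, by linarith [hp.2]⟩
    have := (hno p (by linarith) (by linarith) hc.ne).2
    nlinarith
  have q3 : ∀ r, 1 / 2 ≤ r → r < 3 / 4 → u r ≤ 0 := by
    intro r hr hr'
    by_contra h
    obtain ⟨p, hp, a, b⟩ := fwd hd hr' h34 (by simpa using h)
    have hs := s2 p ⟨by linarith [hp.1], by linarith [hp.2]⟩
    have hc := c2 p ⟨by linarith [hp.1], hp.2⟩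
    have := (hno p (by linarith) (by linarith) hc.ne).2
    nlinarith
  have h12 : u (1 / 2) = 0 :=
    le_antisymm (q3 _ le_rfl (by norm_num)) (q2 _ (by norm_num) le_rfl)
  have q2' : ∀ r, 1 / 4 < r → r < 1 / 2 → u r = 0 := by
    intro r hr hr'
    by_contra hne
    have h := lt_of_le_of_ne (q2 r hr hr'.le) (Ne.symm hne)
    obtain ⟨p, hp, a, b⟩ := fwd hd hr' h12 h
    have hc := c2 p ⟨by linarith [hp.1], by linarith [hp.2]⟩
    have := (hno p (by linarith) (by linarith) hc.ne).1
    nlinarith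
  have q3' : ∀ r, 1 / 2 < r → r < 3 / 4 → u r = 0 := by
    intro r hr hr'
    by_contra hne
    have h := lt_of_le_of_ne (q3 r hr.le hr') hne
    obtain ⟨p, hp, a, b⟩ := back hd' hr (by simpa using h12) (by simpa using h)
    have hc := c2 p ⟨by linarith [hp.1], by linarith [hp.2]⟩
    have := (hno p (by linarith) (by linarith) hc.ne).1
    nlinarith
  obtain ⟨x, hx⟩ := hne
  have hper : Function.Periodic u 1 := hp
  have hfr : u (Int.fract x) = u x := by
    have := hper.sub_int_mul_eq (x := x) ⌊x⌋
    rw [mul_one] at this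
    exact this
  apply hx
  rw [← hfr]
  have hf0 := Int.fract_nonneg x
  have hf1 := Int.fract_lt_one x
  generalize Int.fract x = r at hf0 hf1
  rcases hf0.eq_or_lt with rfl | hf0
  · exact h0
  rcases le_or_gt r (1 / 4) with a | a
  · exact q1 r hf0 a
  rcases lt_trichotomy r (1 / 2) with b | b | b
  · exact q2' r a b
  · rw [b]; exact h12
  rcases lt_or_ge r (3 / 4) with c | c
  · exact q3' r b c
  · exact q4 r c hf1

/-- Boundary displacement data. -/
structure BD (δ : ℝ) (u v : ℝ → ℝ) : Prop where
  cv : Continuous v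
  d : ∀ x, HasDerivAt u (v x) x
  bu : ∀ x, |u x| ≤ δ
  bv : ∀ x, |v x| ≤ δ
  pu : ∀ x, u (x + 1) = u x
  u0 : u 0 = 0
  ne : ∃ x, u x ≠ 0

theorem BD.cu {δ : ℝ} {u v : ℝ → ℝ} (h : BD δ u v) : Continuous u :=
  continuous_iff_continuousAt.2 fun x => (h.d x).continuousAt

theorem BD.pv {δ : ℝ} {u v : ℝ → ℝ} (h : BD δ u v) (x : ℝ) : v (x + 1) = v x := by
  have h1 : HasDerivAt (fun y => u (y + 1)) (v (x + 1)) x := (h.d (x + 1)).comp_add_const x 1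
  have h2 : (fun y => u (y + 1)) = u := funext h.pu
  rw [h2] at h1
  exact h1.unique (h.d x)

theorem BD.uint {δ : ℝ} {u v : ℝ → ℝ} (h : BD δ u v) (m : ℤ) : u m = 0 := by
  have hper : Function.Periodic u 1 := h.pu
  have := hper.int_mul_eq m
  rw [mul_one] at this
  rw [this, h.u0]

def Xh (Y : ℝ) : ℝ := ch Y + ch (1 - Y) - 1
def Xh' (Y : ℝ) : ℝ := ch' Y - ch' (1 - Y)

theorem Xh_mem {Y : ℝ} : 0 ≤ Xh Y ∧ Xh Y ≤ 1 := by
  unfold Xh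
  rcases le_total Y (1 / 2) with h | h
  · rw [ch_hi (by linarith : 3 / 8 ≤ 1 - Y)]
    have := ch_mem Y
    constructor <;> linarith
  · rw [ch_hi (by linarith : 3 / 8 ≤ Y)]
    have := ch_mem (1 - Y)
    constructor <;> linarith

theorem Xh'_abs (Y : ℝ) : |Xh' Y| ≤ 64 := by
  unfold Xh'
  rw [abs_le]
  constructor <;> linarith [ch'_le Y, ch'_le (1 - Y), ch'_nonneg Y, ch'_nonneg (1 - Y)]

section data
variable (u₀ v₀ u₁ v₁ : ℝ → ℝ) (ν : ℝ)

def gP (x Y : ℝ) : ℝ := u₀ x * ph' Y + u₁ x * ph' (1 - Y) +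
  ν * (Real.sin (2 * Real.pi * x) / (2 * Real.pi)) * Xh' Y
def gQ (x Y : ℝ) : ℝ := v₀ x * ph Y - v₁ x * ph (1 - Y) + ν * Real.cos (2 * Real.pi * x) * Xh Y
def gW (x Y : ℝ) : ℝ := v₀ x * ph' Y + v₁ x * ph' (1 - Y) + ν * Real.cos (2 * Real.pi * x) * Xh' Y

end data

section body
variable {u₀ v₀ u₁ v₁ : ℝ → ℝ} {δ ν : ℝ}

theorem sin_per (x : ℝ) : Real.sin (2 * Real.pi * (x + 1)) = Real.sin (2 * Real.pi * x) := by
  rw [mul_add, mul_one, Real.sin_add_two_pi]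
theorem cos_per (x : ℝ) : Real.cos (2 * Real.pi * (x + 1)) = Real.cos (2 * Real.pi * x) := by
  rw [mul_add, mul_one, Real.cos_add_two_pi]

theorem gP_abs (h₀ : BD δ u₀ v₀) (h₁ : BD δ u₁ v₁) (hν : 0 < ν) (x : ℝ) {Y : ℝ}
    (hY : Y ∈ Icc (0 : ℝ) 1) : |gP u₀ u₁ ν x Y| ≤ 2 * δ + 64 * ν := by
  have hpi := Real.pi_gt_three
  have a1 : |u₀ x * ph' Y| ≤ δ := by
    rw [abs_mul]
    have := h₀.bu x
    have := ph'_abs hY.1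
    nlinarith [abs_nonneg (u₀ x), abs_nonneg (ph' Y)]
  have a2 : |u₁ x * ph' (1 - Y)| ≤ δ := by
    rw [abs_mul]
    have := h₁.bu x
    have := ph'_abs (by linarith [hY.2] : 0 ≤ 1 - Y)
    nlinarith [abs_nonneg (u₁ x), abs_nonneg (ph' (1 - Y))]
  have a3 : |ν * (Real.sin (2 * Real.pi * x) / (2 * Real.pi)) * Xh' Y| ≤ 64 * ν := by
    rw [abs_mul, abs_mul, abs_of_pos hν]
    have b1 : |Real.sin (2 * Real.pi * x) / (2 * Real.pi)| ≤ 1 := by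
      rw [abs_div, abs_of_pos (by positivity : 0 < 2 * Real.pi), div_le_one (by positivity)]
      linarith [Real.abs_sin_le_one (2 * Real.pi * x)]
    have b2 := Xh'_abs Y
    have b3 : ν * |Real.sin (2 * Real.pi * x) / (2 * Real.pi)| ≤ ν := by nlinarith
    nlinarith [abs_nonneg (Xh' Y)]
  unfold gP
  have := abs_add_three (u₀ x * ph' Y) (u₁ x * ph' (1 - Y)) (ν * (Real.sin (2 * Real.pi * x) / (2 * Real.pi)) * Xh' Y)
  linarith

theorem gW_abs (h₀ : BD δ u₀ v₀) (h₁ : BD δ u₁ v₁) (hν : 0 < ν) (x : ℝ) {Y : ℝ}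
    (hY : Y ∈ Icc (0 : ℝ) 1) : |gW v₀ v₁ ν x Y| ≤ 2 * δ + 64 * ν := by
  have a1 : |v₀ x * ph' Y| ≤ δ := by
    rw [abs_mul]
    have := h₀.bv x
    have := ph'_abs hY.1
    nlinarith [abs_nonneg (v₀ x), abs_nonneg (ph' Y)]
  have a2 : |v₁ x * ph' (1 - Y)| ≤ δ := by
    rw [abs_mul]
    have := h₁.bv x
    have := ph'_abs (by linarith [hY.2] : 0 ≤ 1 - Y)
    nlinarith [abs_nonneg (v₁ x), abs_nonneg (ph' (1 - Y))]
  have a3 : |ν * Real.cos (2 * Real.pi * x) * Xh' Y| ≤ 64 * ν := by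
    rw [abs_mul, abs_mul, abs_of_pos hν]
    have b1 := Real.abs_cos_le_one (2 * Real.pi * x)
    have b2 := Xh'_abs Y
    have b3 : ν * |Real.cos (2 * Real.pi * x)| ≤ ν := by nlinarith
    nlinarith [abs_nonneg (Xh' Y)]
  unfold gW
  have := abs_add_three (v₀ x * ph' Y) (v₁ x * ph' (1 - Y)) (ν * Real.cos (2 * Real.pi * x) * Xh' Y)
  linarith

theorem cosX_abs (hν : 0 < ν) (x Y : ℝ) : |ν * Real.cos (2 * Real.pi * x) * Xh Y| ≤ ν := by
  rw [abs_mul, abs_mul, abs_of_pos hν]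
  have b1 := Real.abs_cos_le_one (2 * Real.pi * x)
  have b2 := @Xh_mem Y
  rw [abs_of_nonneg b2.1]
  have b3 : ν * |Real.cos (2 * Real.pi * x)| ≤ ν := by nlinarith
  nlinarith

theorem gQ_abs (h₀ : BD δ u₀ v₀) (h₁ : BD δ u₁ v₁) (hν : 0 < ν) (x : ℝ) {Y : ℝ}
    (hY : Y ∈ Icc (0 : ℝ) 1) : |gQ v₀ v₁ ν x Y| ≤ 2 * δ + ν := by
  have a1 : |v₀ x * ph Y| ≤ δ := by
    rw [abs_mul, abs_of_nonneg (ph_nonneg hY.1)]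
    have := h₀.bv x
    have := ph_le_one hY.1
    have := ph_nonneg hY.1
    nlinarith [abs_nonneg (v₀ x)]
  have a2 : |v₁ x * ph (1 - Y)| ≤ δ := by
    have h : 0 ≤ 1 - Y := by linarith [hY.2]
    rw [abs_mul, abs_of_nonneg (ph_nonneg h)]
    have := h₁.bv x
    have := ph_le_one h
    have := ph_nonneg h
    nlinarith [abs_nonneg (v₁ x)]
  have a3 := cosX_abs hν x Y
  unfold gQ
  have := abs_add_three (v₀ x * ph Y) (-(v₁ x * ph (1 - Y))) (ν * Real.cos (2 * Real.pi * x) * Xh Y)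
  rw [abs_neg] at this
  rw [sub_eq_add_neg]
  linarith

theorem gd (h₀ : BD δ u₀ v₀) (h₁ : BD δ u₁ v₁) (hν : 0 < ν) (hδ : δ ≤ 1 / 8) (hν' : 64 * ν ≤ 1 / 8) :
    GD (gP u₀ u₁ ν) (gQ v₀ v₁ ν) (gW v₀ v₁ ν) where
  cP := by
    have := h₀.cu; have := h₁.cu; have := ph'_cont; have := ch'_cont
    unfold gP Xh'; fun_prop
  cQ := by
    have := h₀.cv; have := h₁.cv; have := ph_cont; have := ch_cont
    unfold gQ Xh; fun_prop
  cW := by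
    have := h₀.cv; have := h₁.cv; have := ph'_cont; have := ch'_cont
    unfold gW Xh'; fun_prop
  dP x Y := by
    have hs : HasDerivAt (fun x => Real.sin (2 * Real.pi * x) / (2 * Real.pi))
        (Real.cos (2 * Real.pi * x)) x := by
      have h1 : HasDerivAt (fun x => 2 * Real.pi * x) (2 * Real.pi) x := by
        simpa using (hasDerivAt_id x).const_mul (2 * Real.pi)
      have h2 := (h1.sin).div_const (2 * Real.pi)
      refine h2.congr_deriv ?_
      field_simp
    exact (((h₀.d x).mul_const _).add ((h₁.d x).mul_const _)).add ((hs.const_mul ν).mul_const _)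
  dQ x Y := by
    have hr : HasDerivAt (fun Y : ℝ => 1 - Y) (-1) Y := (hasDerivAt_id Y).const_sub 1
    have h1 : HasDerivAt (fun Y => ph (1 - Y)) (ph' (1 - Y) * (-1)) Y := (ph_deriv (1 - Y)).comp Y hr
    have h2 : HasDerivAt (fun Y => ch (1 - Y)) (ch' (1 - Y) * (-1)) Y := (ch_deriv (1 - Y)).comp Y hr
    have h3 : HasDerivAt Xh (ch' Y + ch' (1 - Y) * (-1)) Y := ((ch_deriv Y).add h2).sub_const 1
    have h4 := (((ph_deriv Y).const_mul (v₀ x)).sub (h1.const_mul (v₁ x))).add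
      (h3.const_mul (ν * Real.cos (2 * Real.pi * x)))
    refine h4.congr_deriv ?_
    unfold gW Xh'; ring
  bW x Y hY := (gW_abs h₀ h₁ hν x hY).trans (by linarith)
  bP x Y hY := (gP_abs h₀ h₁ hν x hY).trans (by linarith)
  pP x Y := by unfold gP; rw [h₀.pu, h₁.pu, sin_per]
  pQ x Y := by unfold gQ; rw [h₀.pv, h₁.pv, cos_per]
  Q0 x := by
    unfold gQ Xh
    rw [sub_zero, ph_zero, ph_hi (by norm_num : (1 / 4 : ℝ) ≤ 1), ch_lo (by norm_num : (0 : ℝ) ≤ 1 / 8),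
      ch_hi (by norm_num : (3 / 8 : ℝ) ≤ 1)]
    ring
  Q1 x := by
    unfold gQ Xh
    rw [sub_self, ph_zero, ph_hi (by norm_num : (1 / 4 : ℝ) ≤ 1), ch_lo (by norm_num : (0 : ℝ) ≤ 1 / 8),
      ch_hi (by norm_num : (3 / 8 : ℝ) ≤ 1)]
    ring

theorem gP_lo {x Y : ℝ} (h : Y ≤ 1 / 2) : gP u₀ u₁ ν x Y =
    u₀ x * ph' Y + ν * (Real.sin (2 * Real.pi * x) / (2 * Real.pi)) * ch' Y := by
  unfold gP Xh'
  rw [ph'_hi (by linarith : 1 / 4 ≤ 1 - Y), ch'_hi (by linarith : 3 / 8 ≤ 1 - Y)]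
  ring

theorem gQ_lo {x Y : ℝ} (h : Y ≤ 1 / 2) : gQ v₀ v₁ ν x Y =
    v₀ x * ph Y + ν * Real.cos (2 * Real.pi * x) * ch Y := by
  unfold gQ Xh
  rw [ph_hi (by linarith : 1 / 4 ≤ 1 - Y), ch_hi (by linarith : 3 / 8 ≤ 1 - Y)]
  ring

theorem gP_hi {x Y : ℝ} (h : 1 / 2 ≤ Y) : gP u₀ u₁ ν x Y =
    -((-u₁ x) * ph' (1 - Y) + ν * (Real.sin (2 * Real.pi * x) / (2 * Real.pi)) * ch' (1 - Y)) := by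
  unfold gP Xh'
  rw [ph'_hi (by linarith : 1 / 4 ≤ Y), ch'_hi (by linarith : 3 / 8 ≤ Y)]
  ring

theorem gQ_hi {x Y : ℝ} (h : 1 / 2 ≤ Y) : gQ v₀ v₁ ν x Y =
    (-v₁ x) * ph (1 - Y) + ν * Real.cos (2 * Real.pi * x) * ch (1 - Y) := by
  unfold gQ Xh
  rw [ph_hi (by linarith : 1 / 4 ≤ Y), ch_hi (by linarith : 3 / 8 ≤ Y)]
  ring

/-- Not a critical point of the generating function. -/
def NF (u₀ v₀ u₁ v₁ : ℝ → ℝ) (ν x Y : ℝ) : Prop := gQ v₀ v₁ ν x Y ≠ 0 ∨ gP u₀ u₁ ν x Y ≠ 0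

theorem nf_loop (hν : 0 < ν) (x : ℝ) : NF u₀ v₀ u₁ v₁ ν x (5 / 16) := by
  unfold NF
  rw [gQ_lo (by norm_num), gP_lo (by norm_num), ph_hi (by norm_num), ph'_hi (by norm_num)]
  have h1 : 0 < ch (5 / 16) := ch_pos (by norm_num)
  have h2 : 0 < ch' (5 / 16) := ch'_pos (by norm_num) (by norm_num)
  by_cases hc : Real.cos (2 * Real.pi * x) = 0
  · right
    have hs : Real.sin (2 * Real.pi * x) ≠ 0 := by
      intro h
      have := Real.sin_sq_add_cos_sq (2 * Real.pi * x)
      rw [h, hc] at this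
      norm_num at this
    have := Real.pi_pos.ne'
    simp [hν.ne', h2.ne', hs, this]
  · left
    simp [hν.ne', h1.ne', hc]

theorem div_pi_neg {a s : ℝ} (h : a * s < 0) : a * (s / (2 * Real.pi)) < 0 := by
  rw [← mul_div_assoc]
  exact div_neg_of_neg_of_pos h (by positivity)

theorem nf_bot (hν : 0 < ν) (h₀ : BD δ u₀ v₀) : ∃ p, ∀ Y ∈ Icc (0 : ℝ) (5 / 16), NF u₀ v₀ u₁ v₁ ν p Y := by
  obtain ⟨p, h1, h2, h3, h4⟩ := exists_good h₀.d h₀.u0 h₀.pu h₀.ne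
  refine ⟨p, fun Y hY => ?_⟩
  unfold NF
  rw [gQ_lo (by linarith [hY.2]), gP_lo (by linarith [hY.2])]
  exact half_ne hν hY.1 h1 h2 h3 (h4.imp id div_pi_neg)

theorem nf_top (hν : 0 < ν) (h₁ : BD δ u₁ v₁) :
    ∃ p, ∀ Y ∈ Icc (5 / 16 : ℝ) 1, NF u₀ v₀ u₁ v₁ ν p Y := by
  obtain ⟨p, h1, h2, h3, h4⟩ := exists_good (u := fun x => -u₁ x) (v := fun x => -v₁ x)
    (fun x => (h₁.d x).neg) (by simp [h₁.u0]) (fun x => by simp only [h₁.pu])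
    (by obtain ⟨x, hx⟩ := h₁.ne; exact ⟨x, by simpa using hx⟩)
  refine ⟨p, fun Y hY => ?_⟩
  rcases le_total Y (1 / 2) with h | h
  · left
    rw [gQ_lo h, ph_hi (by linarith [hY.1])]
    have := ch_pos (by linarith [hY.1] : 1 / 8 < Y)
    simp [hν.ne', this.ne', h3]
  · unfold NF
    rw [gQ_hi h, gP_hi h, neg_ne_zero]
    exact half_ne hν (by linarith [hY.2]) h1 h2 h3 (h4.imp id div_pi_neg)

/-- The twist function. -/
def kap (a₀ a₁ : ℝ) (j : ℕ) (y : ℝ) : ℝ :=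
  a₀ + (j - a₀) * (pj (8 * (y - 1 / 4)) : ℝ) - j * (pj (8 * (y - 7 / 16)) : ℝ)
    + a₁ * (pj (8 * (y - 5 / 8)) : ℝ)

theorem pj_lo {y : ℝ} (h : y ≤ 0) : (pj y : ℝ) = 0 := by
  simp [pj, Set.projIcc_of_le_left zero_le_one h]
theorem pj_hi {y : ℝ} (h : 1 ≤ y) : (pj y : ℝ) = 1 := by
  simp [pj, Set.projIcc_of_right_le zero_le_one h]

variable (a₀ a₁ : ℝ) (j : ℕ)

theorem kap_cont : Continuous (kap a₀ a₁ j) := by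
  have := pj_cont
  unfold kap; fun_prop

theorem kap_bot {y : ℝ} (h : y ≤ 1 / 4) : kap a₀ a₁ j y = a₀ := by
  unfold kap
  rw [pj_lo (by linarith), pj_lo (by linarith), pj_lo (by linarith)]; ring
theorem kap_j : kap a₀ a₁ j (7 / 16) = j := by
  unfold kap
  rw [pj_hi (by norm_num), pj_lo (by norm_num), pj_lo (by norm_num)]; ring
theorem kap_0 : kap a₀ a₁ j (9 / 16) = 0 := by
  unfold kap
  rw [pj_hi (by norm_num), pj_hi (by norm_num), pj_lo (by norm_num)]; ring
theorem kap_top {y : ℝ} (h : 3 / 4 ≤ y) : kap a₀ a₁ j y = a₁ := by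
  unfold kap
  rw [pj_hi (by linarith), pj_hi (by linarith), pj_hi (by linarith)]; ring

theorem pj_lip (c x y : ℝ) : |(pj (8 * (x - c)) : ℝ) - pj (8 * (y - c))| ≤ 8 * |x - y| := by
  have h : |(pj (8 * (x - c)) : ℝ) - pj (8 * (y - c))| ≤ |8 * (x - c) - 8 * (y - c)| :=
    abs_projIcc_sub_projIcc zero_le_one
  have e : 8 * (x - c) - 8 * (y - c) = 8 * (x - y) := by ring
  rw [e, abs_mul] at h
  simpa using h

def Lc : ℝ := 8 * (|j - a₀| + j + |a₁|)

theorem kap_lip (x y : ℝ) : |kap a₀ a₁ j x - kap a₀ a₁ j y| ≤ Lc a₀ a₁ j * |x - y| := by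
  have h1 := pj_lip (1 / 4) x y
  have h2 := pj_lip (7 / 16) x y
  have h3 := pj_lip (5 / 8) x y
  unfold kap Lc
  generalize (pj (8 * (x - 1 / 4)) : ℝ) = A at *
  generalize (pj (8 * (y - 1 / 4)) : ℝ) = A' at *
  generalize (pj (8 * (x - 7 / 16)) : ℝ) = B at *
  generalize (pj (8 * (y - 7 / 16)) : ℝ) = B' at *
  generalize (pj (8 * (x - 5 / 8)) : ℝ) = C at *
  generalize (pj (8 * (y - 5 / 8)) : ℝ) = C' at *
  have e : a₀ + (j - a₀) * A - j * B + a₁ * C - (a₀ + (j - a₀) * A' - j * B' + a₁ * C') =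
    (j - a₀) * (A - A') + (-(j * (B - B'))) + a₁ * (C - C') := by ring
  rw [e]
  refine (abs_add_three _ _ _).trans ?_
  rw [abs_neg, abs_mul, abs_mul, abs_mul, abs_of_nonneg (Nat.cast_nonneg j : (0 : ℝ) ≤ j)]
  have k1 := mul_le_mul_of_nonneg_left h1 (abs_nonneg (j - a₀))
  have k2 := mul_le_mul_of_nonneg_left h2 (Nat.cast_nonneg j : (0 : ℝ) ≤ j)
  have k3 := mul_le_mul_of_nonneg_left h3 (abs_nonneg a₁)
  linarith

theorem kap_bdd : ∃ K : ℝ, ∀ y ∈ Icc (0 : ℝ) 1, |kap a₀ a₁ j y| ≤ K :=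
  (isCompact_Icc (a := (0 : ℝ)) (b := 1)).exists_bound_of_continuousOn (kap_cont a₀ a₁ j).continuousOn

theorem kap_Q (h₀ : BD δ u₀ v₀) (h₁ : BD δ u₁ v₁) (hν : 0 < ν) (hδ : δ ≤ 1 / 8) (x : ℝ) {Y : ℝ}
    (hY : Y ∈ Icc (0 : ℝ) 1) :
    |kap a₀ a₁ j Y - kap a₀ a₁ j (Y + gQ v₀ v₁ ν x Y)| ≤ Lc a₀ a₁ j * ν := by
  have hL : 0 ≤ Lc a₀ a₁ j := by unfold Lc; positivity
  have key : kap a₀ a₁ j Y = kap a₀ a₁ j (Y + (v₀ x * ph Y - v₁ x * ph (1 - Y))) := by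
    rcases le_total Y (1 / 4) with h | h
    · rw [ph_hi (by linarith : 1 / 4 ≤ 1 - Y), kap_bot _ _ _ h, kap_bot]
      have h1 := ph_le hY.1 h
      have h2 := ph_nonneg hY.1
      have h3 := (abs_le.1 (h₀.bv x)).2
      nlinarith
    rcases le_total (3 / 4) Y with h' | h'
    · rw [ph_hi h, kap_top _ _ _ h', kap_top]
      have h1 := ph_le (by linarith [hY.2] : 0 ≤ 1 - Y) (by linarith)
      have h2 := ph_nonneg (by linarith [hY.2] : 0 ≤ 1 - Y)
      have h3 := (abs_le.1 (h₁.bv x)).2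
      nlinarith
    · rw [ph_hi h, ph_hi (by linarith : 1 / 4 ≤ 1 - Y)]
      simp
  rw [key]
  refine (kap_lip a₀ a₁ j _ _).trans (mul_le_mul_of_nonneg_left ?_ hL)
  have e : Y + (v₀ x * ph Y - v₁ x * ph (1 - Y)) - (Y + gQ v₀ v₁ ν x Y) =
    -(ν * Real.cos (2 * Real.pi * x) * Xh Y) := by unfold gQ; ring
  rw [e, abs_neg]
  exact cosX_abs hν x Y

end body


theorem pj_zero : pj 0 = 0 := Subtype.ext (pj_lo le_rfl)
theorem pj_one : pj 1 = 1 := Subtype.ext (pj_hi le_rfl)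

section conj
variable {P Q W : ℝ → ℝ → ℝ}

/-- The conjugated isotopy. -/
def fcs (g : GD P Q W) (κ : ℝ → ℝ) (hκ : Continuous κ) (c : I) : (ℝ × I) ≃ₜ (ℝ × I) :=
  (shear κ hκ).symm.trans ((g.F c).trans (shear κ hκ))

theorem shear_apply (κ : ℝ → ℝ) (hκ : Continuous κ) (z : ℝ × I) :
    shear κ hκ z = (z.1 + κ z.2, z.2) := rfl

theorem shear_symm_apply (κ : ℝ → ℝ) (hκ : Continuous κ) (z : ℝ × I) :
    (shear κ hκ).symm z = (z.1 - κ z.2, z.2) := rfl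

theorem fcs_shear (g : GD P Q W) (κ : ℝ → ℝ) (hκ : Continuous κ) (c : I) (z : ℝ × I) :
    fcs g κ hκ c (shear κ hκ z) = shear κ hκ (g.F c z) := by
  unfold fcs
  rw [Homeomorph.trans_apply, Homeomorph.trans_apply, Homeomorph.symm_apply_apply]

theorem fcs_V (g : GD P Q W) (κ : ℝ → ℝ) (hκ : Continuous κ) (x : ℝ) (Y : I) :
    fcs g κ hκ 1 (shear κ hκ (g.V 1 (x, Y))) = (x + P x Y + κ Y, Y) := by
  rw [fcs_shear, g.F_V, shear_apply]
  simp

theorem fcs_eqv (g : GD P Q W) (κ : ℝ → ℝ) (hκ : Continuous κ) (c : I) : Eqv (fcs g κ hκ c) :=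
  ((shear_eqv κ hκ).comp (g.F_eqv c)).comp (shear_eqv κ hκ).symm

theorem fcs_zero (g : GD P Q W) (κ : ℝ → ℝ) (hκ : Continuous κ) (z : ℝ × I) :
    fcs g κ hκ 0 z = z := by
  unfold fcs
  rw [Homeomorph.trans_apply, Homeomorph.trans_apply, g.F_zero, Homeomorph.apply_symm_apply]

theorem fcs_LP (g : GD P Q W) (κ : ℝ → ℝ) (hκ : Continuous κ) : LP (fcs g κ hκ 1) := by
  have h1 : LP (shear κ hκ) := LP_trans _ κ (fun x y => rfl)
  have h2 : LP (shear κ hκ).symm := LP_trans _ (fun y => -κ y) (fun x y => rfl)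
  exact (h1.comp g.F_LP (shear κ hκ).continuous (shear_eqv κ hκ)).comp h2
    ((shear κ hκ).continuous.comp (g.F 1).continuous) ((shear_eqv κ hκ).comp (g.F_eqv 1))

/-- The map on the annulus. -/
def fan (g : GD P Q W) (κ : ℝ → ℝ) (hκ : Continuous κ) : CAnn ≃ₜ CAnn :=
  desc (fcs g κ hκ 1) (fcs_eqv g κ hκ 1)

theorem fan_apply (g : GD P Q W) (κ : ℝ → ℝ) (hκ : Continuous κ) (z : ℝ × I) :
    fan g κ hκ (pCA z) = pCA (fcs g κ hκ 1 z) := desc_apply _ _ z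

theorem fan_iso (g : GD P Q W) (κ : ℝ → ℝ) (hκ : Continuous κ) : IsotopicToIdCA (fan g κ hκ) := by
  refine ⟨fun q => desc (fcs g κ hκ (pj q.1)) (fcs_eqv g κ hκ _) q.2, ?_, ?_, ?_, ?_⟩
  · refine Continuous.continuousOn ?_
    have hq : IsOpenQuotientMap (Prod.map (id : ℝ → ℝ) pCA) := IsOpenQuotientMap.id.prodMap pCA_quot
    rw [← hq.continuous_comp_iff]
    have e : ((fun q : ℝ × CAnn => desc (fcs g κ hκ (pj q.1)) (fcs_eqv g κ hκ _) q.2) ∘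
        (Prod.map (id : ℝ → ℝ) pCA)) =
        fun q : ℝ × (ℝ × I) => pCA (shear κ hκ (g.F (pj q.1) ((shear κ hκ).symm q.2))) := by
      funext q
      exact desc_apply _ _ q.2
    rw [e]
    have h1 : Continuous fun q : ℝ × (ℝ × I) => (pj q.1, (shear κ hκ).symm q.2) :=
      (pj_cont.comp continuous_fst).prodMk ((shear κ hκ).symm.continuous.comp continuous_snd)
    have h2 : Continuous fun q : ℝ × (ℝ × I) => g.F (pj q.1) ((shear κ hκ).symm q.2) :=
      Continuous.comp (g := fun q : I × (ℝ × I) => g.F q.1 q.2)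
        (f := fun q : ℝ × (ℝ × I) => (pj q.1, (shear κ hκ).symm q.2)) g.F_cont h1
    have h3 : Continuous fun q : ℝ × (ℝ × I) => shear κ hκ (g.F (pj q.1) ((shear κ hκ).symm q.2)) :=
      (shear κ hκ).continuous.comp h2
    exact pCA_quot.continuous.comp h3
  · intro z
    obtain ⟨w, rfl⟩ := pCA_quot.surjective z
    have h0 : pj 0 = 0 := pj_zero
    have : ∀ c : I, c = 0 → desc (fcs g κ hκ c) (fcs_eqv g κ hκ _) (pCA w) = pCA w := by
      rintro c rfl
      rw [desc_apply, fcs_zero]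
    exact this _ h0
  · intro z
    have h0 : pj 1 = 1 := pj_one
    have : ∀ c : I, c = 1 → desc (fcs g κ hκ c) (fcs_eqv g κ hκ _) z = fan g κ hκ z := by
      rintro c rfl
      rfl
    exact this _ h0
  · intro t _
    exact ⟨desc (fcs g κ hκ (pj t)) (fcs_eqv g κ hκ _), fun z => rfl⟩

theorem fan_not_fixed (g : GD P Q W) (κ : ℝ → ℝ) (hκ : Continuous κ)
    (hP : ∀ x, ∀ Y ∈ Icc (0 : ℝ) 1, |P x Y| < 1) (x : ℝ) (Y : I) (h : Q x Y ≠ 0 ∨ P x Y ≠ 0) :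
    fan g κ hκ (pCA (shear κ hκ (g.V 1 (x, Y)))) ≠ pCA (shear κ hκ (g.V 1 (x, Y))) := by
  rw [fan_apply, fcs_V]
  intro e
  obtain ⟨n, h1, h2⟩ := (pCA_eq_iff _ _).1 e
  rw [shear_apply, g.V_apply] at h1 h2
  simp only at h1 h2
  have hQ : Q x Y = 0 := by
    have := congrArg (Subtype.val) h2
    simpa [GD.ve] using this
  rw [h2] at h1
  have h3 : P x Y = ((-n : ℤ) : ℝ) := by push_cast; linarith
  have h4 := hP x Y Y.2
  rw [h3, ← Int.cast_abs] at h4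
  have h5 : |(-n)| < 1 := by exact_mod_cast h4
  rw [Int.abs_lt_one_iff] at h5
  rw [h5] at h3
  rcases h with h | h
  · exact h hQ
  · exact h (by simpa using h3)

theorem F_strip (g : GD P Q W) (hint : ∀ (m : ℤ) (Y : ℝ), P m Y = 0) (m : ℤ) (z : ℝ × I)
    (hz : z.1 ∈ Icc (m : ℝ) (m + 1)) : (g.F 1 z).1 ∈ Icc (m : ℝ) (m + 1) := by
  obtain ⟨⟨x, Y⟩, rfl⟩ := (g.V 1).surjective z
  rw [g.F_V]
  rw [g.V_apply] at hz
  simp only at hz ⊢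
  have h := (g.hm 1 Y).monotone
  have h1 := h hz.1
  have h2 := h hz.2
  have h3 := hint (m + 1) Y
  push_cast at h3
  simp only [hint, h3] at h1 h2
  simp only [mul_zero, add_zero] at h1 h2
  exact ⟨h1, h2⟩

theorem F_strip_iter (g : GD P Q W) (hint : ∀ (m : ℤ) (Y : ℝ), P m Y = 0) (m : ℤ) (z : ℝ × I)
    (hz : z.1 ∈ Icc (m : ℝ) (m + 1)) (n : ℕ) : ((g.F 1)^[n] z).1 ∈ Icc (m : ℝ) (m + 1) := by
  induction n with
  | zero => exact hz
  | succ n ih =>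
    rw [Function.iterate_succ_apply']
    exact F_strip g hint m _ ih

theorem fcs_iter (g : GD P Q W) (κ : ℝ → ℝ) (hκ : Continuous κ) (n : ℕ) (z : ℝ × I) :
    (fcs g κ hκ 1)^[n] (shear κ hκ z) = shear κ hκ ((g.F 1)^[n] z) := by
  have : Function.Semiconj (shear κ hκ) (g.F 1) (fcs g κ hκ 1) := fun z => (fcs_shear g κ hκ 1 z).symm
  exact ((this.iterate_right n) z).symm

theorem fcs_rot (g : GD P Q W) (κ : ℝ → ℝ) (hκ : Continuous κ)
    (hint : ∀ (m : ℤ) (Y : ℝ), P m Y = 0) (K : ℝ) (hK : ∀ y ∈ Icc (0 : ℝ) 1, |κ y| ≤ K) :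
    rotCA (fcs g κ hκ 1) = {(0 : EReal)} := by
  have bd : ∀ (z : ℝ × I) (n : ℕ), |((fcs g κ hκ 1)^[n] z).1 - z.1| ≤ 1 + 2 * K := by
    intro z n
    obtain ⟨w, rfl⟩ := (shear κ hκ).surjective z
    rw [fcs_iter, shear_apply, shear_apply]
    have h0 : w.1 ∈ Icc ((⌊w.1⌋ : ℤ) : ℝ) ((⌊w.1⌋ : ℤ) + 1) :=
      ⟨Int.floor_le _, (Int.lt_floor_add_one _).le⟩
    have h1 := F_strip_iter g hint _ w h0 n
    have h2 := abs_le.1 (hK _ w.2.2)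
    have h3 := abs_le.1 (hK _ ((g.F 1)^[n] w).2.2)
    simp only
    rw [abs_le]
    constructor <;> linarith [h0.1, h0.2, h1.1, h1.2, h2.1, h2.2, h3.1, h3.2]
  have lim : ∀ (z : ℕ → ℝ × I) (n : ℕ → ℕ), Tendsto n atTop atTop →
      Tendsto (fun k => (((((fcs g κ hκ 1))^[n k] (z k)).1 - (z k).1) / (n k) : ℝ)) atTop (𝓝 0) := by
    intro z n hn
    have ht : Tendsto (fun k => (1 + 2 * K) / (n k : ℝ)) atTop (𝓝 0) :=
      (tendsto_const_div_atTop_nhds_zero_nat (1 + 2 * K)).comp hn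
    refine squeeze_zero_norm (fun k => ?_) ht
    rw [Real.norm_eq_abs, abs_div, Nat.abs_cast]
    exact div_le_div_of_nonneg_right (bd _ _) (Nat.cast_nonneg _)
  ext ρ
  simp only [rotCA, Set.mem_ofPred_eq, Set.mem_singleton_iff]
  constructor
  · rintro ⟨z, n, hn, ht⟩
    have h1 := (continuous_coe_real_ereal.tendsto 0).comp (lim z n hn)
    exact tendsto_nhds_unique ht h1
  · rintro rfl
    refine ⟨fun _ => (0, 0), id, tendsto_id, ?_⟩
    exact (continuous_coe_real_ereal.tendsto 0).comp (lim (fun _ => (0, 0)) id tendsto_id)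

theorem fcs_dist (g : GD P Q W) (κ : ℝ → ℝ) (hκ : Continuous κ) (ε : ℝ)
    (hx : ∀ x, ∀ Y ∈ Icc (0 : ℝ) 1, |P x Y| + |κ Y - κ (Y + Q x Y)| < ε)
    (hy : ∀ x, ∀ Y ∈ Icc (0 : ℝ) 1, |Q x Y| < ε) (z : CAnn) : dist (fan g κ hκ z) z < ε := by
  obtain ⟨w, rfl⟩ := pCA_quot.surjective z
  obtain ⟨w, rfl⟩ := (shear κ hκ).surjective w
  obtain ⟨⟨x, Y⟩, rfl⟩ := (g.V 1).surjective w
  rw [fan_apply, fcs_V, shear_apply, g.V_apply]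
  have hve : ((g.ve 1 x Y : I) : ℝ) = Y + Q x Y := by simp [GD.ve]
  unfold pCA
  simp only
  rw [hve, Prod.dist_eq, max_lt_iff]
  constructor
  · simp only
    rw [dist_eq_norm, ← AddCircle.coe_sub]
    have h1 : ‖((x + P x Y + κ Y - (x + κ (Y + Q x Y)) : ℝ) : T1)‖ ≤
        ‖x + P x Y + κ Y - (x + κ (Y + Q x Y))‖ := QuotientAddGroup.norm_mk_le_norm
    have h2 : x + P x Y + κ Y - (x + κ (Y + Q x Y)) = P x Y + (κ Y - κ (Y + Q x Y)) := by ring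
    rw [h2] at h1 ⊢
    have := abs_add_le (P x Y) (κ Y - κ (Y + Q x Y))
    rw [Real.norm_eq_abs] at h1
    linarith [hx x Y Y.2]
  · simp only
    rw [Subtype.dist_eq, hve, Real.dist_eq]
    have : (Y : ℝ) - (Y + Q x Y) = - Q x Y := by ring
    rw [this, abs_neg]
    exact hy x Y Y.2

/-- The path in generating coordinates, pushed to the plane. -/
def psi (g : GD P Q W) (κ : ℝ → ℝ) (hκ : Continuous κ) (x Y : ℝ) : ℝ × I :=
  shear κ hκ (g.V 1 (x, pj Y))

theorem psi_cont (g : GD P Q W) (κ : ℝ → ℝ) (hκ : Continuous κ) {a b : ℝ → ℝ} (ha : Continuous a)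
    (hb : Continuous b) : Continuous fun t => psi g κ hκ (a t) (b t) :=
  (shear κ hκ).continuous.comp ((g.V 1).continuous.comp (ha.prodMk (pj_cont.comp hb)))

theorem psi_snd (g : GD P Q W) (κ : ℝ → ℝ) (hκ : Continuous κ) (x Y : ℝ) :
    (psi g κ hκ x Y).2 = g.ve 1 x (pj Y) := rfl

theorem ve_zero (g : GD P Q W) (x : ℝ) : g.ve 1 x 0 = 0 := Subtype.ext (by simp [GD.ve, g.Q0])
theorem ve_one (g : GD P Q W) (x : ℝ) : g.ve 1 x 1 = 1 := Subtype.ext (by simp [GD.ve, g.Q1])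

theorem psi_mem (g : GD P Q W) (κ : ℝ → ℝ) (hκ : Continuous κ) (x : ℝ) {Y : ℝ}
    (h : Y ∈ Ioo (0 : ℝ) 1) : ((psi g κ hκ x Y).2 : ℝ) ∈ Ioo (0 : ℝ) 1 := by
  rw [psi_snd]
  have e := GD.pj_of_mem ⟨h.1.le, h.2.le⟩
  have h0 : (0 : I) < pj Y := Subtype.coe_lt_coe.1 (by rw [e]; exact h.1)
  have h1 : pj Y < (1 : I) := Subtype.coe_lt_coe.1 (by rw [e]; exact h.2)
  have h2 := g.ve_mono 1 x h0
  have h3 := g.ve_mono 1 x h1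
  rw [ve_zero] at h2
  rw [ve_one] at h3
  exact ⟨h2, h3⟩

theorem psi_nf (g : GD P Q W) (κ : ℝ → ℝ) (hκ : Continuous κ)
    (hP : ∀ x, ∀ Y ∈ Icc (0 : ℝ) 1, |P x Y| < 1) (x : ℝ) {Y : ℝ} (hY : Y ∈ Icc (0 : ℝ) 1)
    (h : Q x Y ≠ 0 ∨ P x Y ≠ 0) :
    fan g κ hκ (pCA (psi g κ hκ x Y)) ≠ pCA (psi g κ hκ x Y) := by
  refine fan_not_fixed g κ hκ hP x (pj Y) ?_
  rw [GD.pj_of_mem hY]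
  exact h

theorem fan_path (g : GD P Q W) (κ : ℝ → ℝ) (hκ : Continuous κ)
    (hP : ∀ x, ∀ Y ∈ Icc (0 : ℝ) 1, |P x Y| < 1)
    (hl : ∀ x, Q x (5 / 16) ≠ 0 ∨ P x (5 / 16) ≠ 0)
    (hb : ∃ p, ∀ Y ∈ Icc (0 : ℝ) (5 / 16), Q p Y ≠ 0 ∨ P p Y ≠ 0)
    (ht : ∃ p, ∀ Y ∈ Icc (5 / 16 : ℝ) 1, Q p Y ≠ 0 ∨ P p Y ≠ 0) :
    ∃ sp : ℝ → CAnn, ContinuousOn sp (Set.Icc 0 1) ∧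
      ((sp 0).2 : ℝ) = 0 ∧ ((sp 1).2 : ℝ) = 1 ∧
      (∀ t ∈ Set.Ioo (0 : ℝ) 1, ((sp t).2 : ℝ) ∈ Set.Ioo (0 : ℝ) 1) ∧
      (∀ t ∈ Set.Icc (0 : ℝ) 1, fan g κ hκ (sp t) ≠ sp t) := by
  obtain ⟨p, hp⟩ := hb
  obtain ⟨q, hq⟩ := ht
  let xx : ℝ → ℝ := fun t => p + (q - p) * (pj (2 * t - 5 / 16) : ℝ)
  let yy : ℝ → ℝ := fun t => min (2 * t) (max (5 / 16) (2 * t - 1))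
  have cx : Continuous xx := by
    have := pj_cont
    simp only [xx]; fun_prop
  have cy : Continuous yy := by simp only [yy]; fun_prop
  have e0 : yy 0 = 0 := by simp only [yy]; norm_num
  have e1 : yy 1 = 1 := by simp only [yy]; norm_num
  refine ⟨fun t => pCA (psi g κ hκ (xx t) (yy t)),
    (pCA_quot.continuous.comp (psi_cont g κ hκ cx cy)).continuousOn, ?_, ?_, ?_, ?_⟩
  · change ((psi g κ hκ (xx 0) (yy 0)).2 : ℝ) = 0
    rw [psi_snd, e0, pj_zero, ve_zero]; rfl
  · change ((psi g κ hκ (xx 1) (yy 1)).2 : ℝ) = 1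
    rw [psi_snd, e1, pj_one, ve_one]; rfl
  · intro t ht
    refine psi_mem g κ hκ _ ⟨?_, ?_⟩
    · exact lt_min (by linarith [ht.1]) (lt_max_of_lt_left (by norm_num))
    · rcases lt_or_ge (2 * t) 1 with h | h
      · exact (min_le_left _ _).trans_lt h
      · exact (min_le_right _ _).trans_lt (max_lt (by norm_num) (by linarith [ht.2]))
  · intro t ht
    rcases le_total (2 * t) (5 / 16) with h | h
    · have ex : xx t = p := by simp only [xx]; rw [pj_lo (by linarith)]; ring
      have ey : yy t = 2 * t := min_eq_left (h.trans (le_max_left _ _))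
      simp only [ex, ey]
      exact psi_nf g κ hκ hP _ ⟨by linarith [ht.1], by linarith⟩ (hp _ ⟨by linarith [ht.1], h⟩)
    · rcases le_total (2 * t - 1) (5 / 16) with h' | h'
      · have ey : yy t = 5 / 16 := by
          simp only [yy]; rw [max_eq_left h', min_eq_right h]
        simp only [ey]
        exact psi_nf g κ hκ hP _ ⟨by norm_num, by norm_num⟩ (hl _)
      · have ex : xx t = q := by simp only [xx]; rw [pj_hi (by linarith)]; ring
        have ey : yy t = 2 * t - 1 := by
          simp only [yy]; rw [max_eq_right h', min_eq_right (by linarith)]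
        simp only [ex, ey]
        exact psi_nf g κ hκ hP _ ⟨by linarith, by linarith [ht.2]⟩ (hq _ ⟨h', by linarith [ht.2]⟩)

theorem fan_loop (g : GD P Q W) (κ : ℝ → ℝ) (hκ : Continuous κ)
    (hP : ∀ x, ∀ Y ∈ Icc (0 : ℝ) 1, |P x Y| < 1)
    (hl : ∀ x, Q x (5 / 16) ≠ 0 ∨ P x (5 / 16) ≠ 0) :
    ∃ (Γ : ℝ → ℝ × I) (m : ℤ), m ≠ 0 ∧ Continuous Γ ∧
      (∀ t, Γ (t + 1) = ((Γ t).1 + (m : ℝ), (Γ t).2)) ∧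
      (∀ t, ((Γ t).2 : ℝ) ∈ Set.Ioo (0 : ℝ) 1) ∧
      (∀ t, fan g κ hκ (pCA (Γ t)) ≠ pCA (Γ t)) := by
  refine ⟨fun t => psi g κ hκ t (5 / 16), 1, one_ne_zero, psi_cont g κ hκ continuous_id
    continuous_const, ?_, ?_, ?_⟩
  · intro t
    have := ((shear_eqv κ hκ).comp (g.V_eqv 1)) t (pj (5 / 16))
    simpa [psi] using this
  · intro t
    exact psi_mem g κ hκ _ ⟨by norm_num, by norm_num⟩
  · intro t
    exact psi_nf g κ hκ hP _ ⟨by norm_num, by norm_num⟩ (hl _)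

theorem fan_orbit (g : GD P Q W) (κ : ℝ → ℝ) (hκ : Continuous κ) (ν : ℝ) (hν : 0 < ν) (j : ℕ)
    (hk0 : κ (9 / 16) = 0) (hkj : κ (7 / 16) = j)
    (hP : ∀ Y, P 0 Y = 0) (hQ : ∀ Y ∈ Icc (3 / 8 : ℝ) (5 / 8), Q 0 Y = ν)
    (N : ℕ) (hN : 1 ≤ N) (hNν : N * ν = 1 / 8) (η : ℝ) (hη : 0 < η) :
    ∃ zc : ℝ × I, zc.1 ∈ Set.Icc (0 : ℝ) η ∧
      ∃ n : ℕ, 1 ≤ n ∧ ((fcs g κ hκ 1)^[n] zc).1 ∈ Set.Icc (j : ℝ) ((j : ℝ) + η) := by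
  have step : ∀ n : ℕ, n ≤ N → (g.F 1)^[n] (0, pj (9 / 16)) = (0, pj (9 / 16 - n * ν)) := by
    intro n
    induction n with
    | zero => intro _; simp
    | succ n ih =>
      intro hn
      rw [Function.iterate_succ_apply', ih (by omega)]
      have h1 : ((n + 1 : ℕ) : ℝ) * ν ≤ N * ν :=
        mul_le_mul_of_nonneg_right (by exact_mod_cast hn) hν.le
      have h0 : 0 ≤ (n : ℝ) * ν := by positivity
      push_cast at h1 ⊢
      have h2 : (9 / 16 - (n + 1) * ν : ℝ) ∈ Icc (3 / 8 : ℝ) (5 / 8) :=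
        ⟨by linarith, by linarith⟩
      have e1 : (pj (9 / 16 - (n + 1) * ν) : ℝ) = 9 / 16 - (n + 1) * ν :=
        GD.pj_of_mem ⟨by linarith [h2.1], by linarith [h2.2]⟩
      have e2 : (pj (9 / 16 - n * ν) : ℝ) = 9 / 16 - n * ν :=
        GD.pj_of_mem ⟨by linarith [h2.1], by linarith [h2.2]⟩
      have h3 := g.F_V 1 0 (pj (9 / 16 - (n + 1) * ν))
      have h4 : g.ve 1 0 (pj (9 / 16 - (n + 1) * ν)) = pj (9 / 16 - n * ν) := by
        apply Subtype.ext
        rw [e2]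
        simp only [GD.ve, e1, hQ _ h2]
        simp
        ring
      rw [g.V_apply, h4, hP] at h3
      simpa using h3
  refine ⟨shear κ hκ (0, pj (9 / 16)), ?_, N, hN, ?_⟩
  · rw [shear_apply]
    simp only
    rw [GD.pj_of_mem ⟨by norm_num, by norm_num⟩, hk0]
    constructor <;> linarith
  · rw [fcs_iter, step N le_rfl, hNν, shear_apply]
    simp only
    rw [GD.pj_of_mem ⟨by norm_num, by norm_num⟩, show (9 / 16 - 1 / 8 : ℝ) = 7 / 16 by norm_num, hkj]
    constructor <;> linarith

theorem fan_bdry (g : GD P Q W) (κ : ℝ → ℝ) (hκ : Continuous κ) (Y : I)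
    (hY : ∀ x, Q x Y = 0) (x : ℝ) :
    fan g κ hκ ((x : T1), Y) = (((x + P (x - κ Y) Y : ℝ) : T1), Y) := by
  have h := fcs_V g κ hκ (x - κ Y) Y
  have e : shear κ hκ (g.V 1 (x - κ Y, Y)) = (x, Y) := by
    have : g.ve 1 (x - κ Y) Y = Y := Subtype.ext (by simp [GD.ve, hY])
    rw [g.V_apply, this, shear_apply]
    simp
  rw [e] at h
  have := fan_apply g κ hκ (x, Y)
  rw [h] at this
  have e2 : x - κ Y + P (x - κ Y) Y + κ Y = x + P (x - κ Y) Y := by ring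
  rw [e2] at this
  exact this

end conj

theorem circ_BD {δ : ℝ} (hδ : δ ≤ 1 / 8) {g : T1 ≃ₜ T1} (hg : CircleC1DiffeoClose δ g)
    (hne : ⇑g ≠ id) {x : T1} (hx : g x = x) :
    ∃ (a : ℝ) (u v : ℝ → ℝ), BD δ u v ∧ ∀ y : ℝ, g (y : T1) = ((y + u (y - a) : ℝ) : T1) := by
  obtain ⟨gc, hC, -, hp, hl, hb, hb'⟩ := hg
  obtain ⟨a, rfl⟩ := QuotientAddGroup.mk_surjective x
  change g ((a : ℝ) : T1) = ((a : ℝ) : T1) at hx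
  have ha : gc a = a := by
    rw [hl] at hx
    have h0 : ((gc a - a : ℝ) : T1) = 0 := by rw [AddCircle.coe_sub, hx, sub_self]
    rw [AddCircle.coe_eq_zero_iff] at h0
    obtain ⟨n, hn⟩ := h0
    have h1 := hb a
    rw [← hn] at h1
    simp only [zsmul_eq_mul, mul_one] at h1 hn
    rw [← Int.cast_abs] at h1
    have h2 : |n| < 1 := by
      have : ((|n| : ℤ) : ℝ) < 1 := by linarith
      exact_mod_cast this
    rw [Int.abs_lt_one_iff] at h2
    rw [h2] at hn
    simp at hn
    linarith
  have hd : Differentiable ℝ gc := hC.differentiable one_ne_zero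
  refine ⟨a, fun x => gc (x + a) - (x + a), fun x => deriv gc (x + a) - 1, ⟨?_, ?_, ?_, ?_, ?_, ?_, ?_⟩, ?_⟩
  · have := hC.continuous_deriv_one
    fun_prop
  · intro x
    have h1 : HasDerivAt (fun x => gc (x + a)) (deriv gc (x + a)) x :=
      (hd (x + a)).hasDerivAt.comp_add_const x a
    exact h1.sub ((hasDerivAt_id x).add_const a)
  · intro x; exact (hb _).le
  · intro x; exact (hb' _).le
  · intro x
    have : x + 1 + a = x + a + 1 := by ring
    simp only [this, hp]; ring
  · simp [ha]
  · by_contra! hcon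
    apply hne
    funext y
    obtain ⟨y, rfl⟩ := QuotientAddGroup.mk_surjective y
    change g ((y : ℝ) : T1) = ((y : ℝ) : T1)
    rw [hl]
    have := hcon (y - a)
    simp at this
    rw [show gc y = y by linarith]
  · intro y
    rw [hl]
    congr 1
    simp

/-- **Proposition 5.3.** -/
theorem proposition_construction (x₀ x₀' x₁ x₁' : T1) (ε : ℝ) (hε : 0 < ε) :
    ∃ δ : ℝ, 0 < δ ∧
      ∀ g₀ g₁ : T1 ≃ₜ T1,
        CircleC1DiffeoClose δ g₀ → CircleC1DiffeoClose δ g₁ →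
        ⇑g₀ ≠ id → ⇑g₁ ≠ id →
        g₀ x₀ = x₀ → g₀ x₀' = x₀' → g₁ x₁ = x₁ → g₁ x₁' = x₁' →
        ∀ j : ℕ, 1 ≤ j →
          ∃ (f : CAnn ≃ₜ CAnn) (fc : (ℝ × I) ≃ₜ (ℝ × I)),
            IsotopicToIdCA f ∧
            Measure.map (⇑f) volume = volume ∧
            (∀ z : ℝ × I, pCA (fc z) = f (pCA z)) ∧
            rotCA fc = {(0 : EReal)} ∧
            -- (a) boundary behavior
            (∀ x : T1, f (x, 0) = (g₀ x, 0)) ∧ (∀ x : T1, f (x, 1) = (g₁ x, 1)) ∧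
            -- (b-1) a path joining the two boundary circles avoiding the fixed points
            (∃ sp : ℝ → CAnn, ContinuousOn sp (Set.Icc 0 1) ∧
              ((sp 0).2 : ℝ) = 0 ∧ ((sp 1).2 : ℝ) = 1 ∧
              (∀ t ∈ Set.Ioo (0 : ℝ) 1, ((sp t).2 : ℝ) ∈ Set.Ioo (0 : ℝ) 1) ∧
              (∀ t ∈ Set.Icc (0 : ℝ) 1, f (sp t) ≠ sp t)) ∧
            -- (b-2) an essential loop in the interior avoiding the fixed points
            (∃ (Γ : ℝ → ℝ × I) (m : ℤ), m ≠ 0 ∧ Continuous Γ ∧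
              (∀ t, Γ (t + 1) = ((Γ t).1 + (m : ℝ), (Γ t).2)) ∧
              (∀ t, ((Γ t).2 : ℝ) ∈ Set.Ioo (0 : ℝ) 1) ∧
              (∀ t, f (pCA (Γ t)) ≠ pCA (Γ t))) ∧
            -- (c) large horizontal displacement
            (∀ η : ℝ, 0 < η → ∃ zc : ℝ × I, zc.1 ∈ Set.Icc (0 : ℝ) η ∧
              ∃ n : ℕ, 1 ≤ n ∧ ((⇑fc)^[n] zc).1 ∈ Set.Icc (j : ℝ) ((j : ℝ) + η)) ∧
            -- (d) `f` is `ε`-close to the identity in the C⁰ topology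
            (∀ z : CAnn, dist (f z) z < ε) := by
  refine ⟨min (1 / 8) (ε / 8), by positivity, ?_⟩
  intro g₀ g₁ hg₀ hg₁ hn₀ hn₁ hx₀ _ hx₁ _ j _
  set δ : ℝ := min (1 / 8) (ε / 8) with hδdef
  have hδ : δ ≤ 1 / 8 := min_le_left _ _
  have hδε : δ ≤ ε / 8 := min_le_right _ _
  obtain ⟨a₀, u₀, v₀, h₀, e₀⟩ := circ_BD hδ hg₀ hn₀ hx₀
  obtain ⟨a₁, u₁, v₁, h₁, e₁⟩ := circ_BD hδ hg₁ hn₁ hx₁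
  have hL : 0 ≤ Lc a₀ a₁ j := by unfold Lc; positivity
  obtain ⟨N, hN⟩ := exists_nat_gt (64 + (64 + Lc a₀ a₁ j) / ε)
  have hq : 0 ≤ (64 + Lc a₀ a₁ j) / ε := by positivity
  have hN64 : (64 : ℝ) < N := by linarith
  have hNpos : (0 : ℝ) < N := by linarith
  have hN1 : 1 ≤ N := by
    have : (1 : ℝ) ≤ N := by linarith
    exact_mod_cast this
  have hNε : 64 + Lc a₀ a₁ j < ε * N := by
    have h : (64 + Lc a₀ a₁ j) / ε < N := by linarith
    rw [div_lt_iff₀ hε] at h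
    linarith
  obtain ⟨ν, hνd⟩ : ∃ ν : ℝ, ν = 1 / (8 * N) := ⟨_, rfl⟩
  have hν : 0 < ν := by rw [hνd]; positivity
  have hNν : N * ν = 1 / 8 := by rw [hνd]; field_simp
  have hν' : 64 * ν ≤ 1 / 8 := by nlinarith
  have hνε : (64 + Lc a₀ a₁ j) * ν < ε / 8 := by
    have h := mul_lt_mul_of_pos_right hNε hν
    have h' : ε * N * ν = ε / 8 := by rw [mul_assoc, hNν]; ring
    rwa [h'] at h
  have g := gd h₀ h₁ hν hδ hν'
  have hκ := kap_cont a₀ a₁ j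
  obtain ⟨K, hK⟩ := kap_bdd a₀ a₁ j
  have hP1 : ∀ x, ∀ Y ∈ Icc (0 : ℝ) 1, |gP u₀ u₁ ν x Y| < 1 := fun x Y hY =>
    (gP_abs h₀ h₁ hν x hY).trans_lt (by linarith)
  have hint : ∀ (m : ℤ) (Y : ℝ), gP u₀ u₁ ν m Y = 0 := by
    intro m Y
    have hs : Real.sin (2 * Real.pi * m) = 0 := by
      have := Real.sin_int_mul_pi (2 * m)
      push_cast at this
      rw [← this]; ring_nf
    unfold gP
    rw [h₀.uint, h₁.uint, hs]
    simp
  have hl : ∀ x, gQ v₀ v₁ ν x (5 / 16) ≠ 0 ∨ gP u₀ u₁ ν x (5 / 16) ≠ 0 := fun x =>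
    nf_loop (u₀ := u₀) (v₀ := v₀) (u₁ := u₁) (v₁ := v₁) hν x
  refine ⟨fan g _ hκ, fcs g _ hκ 1, fan_iso g _ hκ, desc_measure _ _ (fcs_LP g _ hκ),
    fun z => (fan_apply g _ hκ z).symm, fcs_rot g _ hκ hint K hK, ?_, ?_,
    fan_path g _ hκ hP1 hl (nf_bot hν h₀) (nf_top hν h₁), fan_loop g _ hκ hP1 hl, ?_, ?_⟩
  · intro x
    obtain ⟨x, rfl⟩ := QuotientAddGroup.mk_surjective x
    have h := fan_bdry g _ hκ 0 g.Q0 x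
    have hk : kap a₀ a₁ j ((0 : I) : ℝ) = a₀ := kap_bot a₀ a₁ j (by norm_num)
    have hp : gP u₀ u₁ ν (x - a₀) ((0 : I) : ℝ) = u₀ (x - a₀) := by
      rw [gP_lo (by norm_num)]
      change u₀ (x - a₀) * ph' 0 + _ * ch' 0 = _
      rw [ph'_zero, ch'_lo (by norm_num)]
      ring
    rw [hk, hp, ← e₀] at h
    exact h
  · intro x
    obtain ⟨x, rfl⟩ := QuotientAddGroup.mk_surjective x
    have h := fan_bdry g _ hκ 1 g.Q1 x
    have hk : kap a₀ a₁ j ((1 : I) : ℝ) = a₁ := kap_top a₀ a₁ j (by norm_num)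
    have hp : gP u₀ u₁ ν (x - a₁) ((1 : I) : ℝ) = u₁ (x - a₁) := by
      rw [gP_hi (by norm_num)]
      change -((-u₁ (x - a₁)) * ph' (1 - 1) + _ * ch' (1 - 1)) = _
      rw [sub_self, ph'_zero, ch'_lo (by norm_num)]
      ring
    rw [hk, hp, ← e₁] at h
    exact h
  · intro η hη
    refine fan_orbit g _ hκ ν hν j (kap_0 a₀ a₁ j) (kap_j a₀ a₁ j)
      (fun Y => by simpa using hint 0 Y) ?_ N hN1 hNν η hη
    intro Y hY
    unfold gQ Xh
    rw [ph_hi (by linarith [hY.1]), ph_hi (by linarith [hY.2]), ch_hi hY.1,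
      ch_hi (by linarith [hY.2])]
    simp
  · have hLν : 0 ≤ Lc a₀ a₁ j * ν := by positivity
    refine fcs_dist g _ hκ ε ?_ ?_
    · intro x Y hY
      have i1 := gP_abs h₀ h₁ hν x hY
      have i2 := kap_Q a₀ a₁ j h₀ h₁ hν hδ x hY
      linarith
    · intro x Y hY
      have i1 := gQ_abs h₀ h₁ hν x hY
      linarith
end
end

section
/- For every real number ε > 0 there exists a real number δ > 0 such that, if g : 𝕋¹ → 𝕋¹ is a C¹ diffeomorphism of the circle which is δ-close to the identity in the C¹ topology, then there exists a C¹ diffeomorphism f of the closed annulus 𝕋¹ × [0,1] which preserves Lebesgue measure, is ε-close to the identity in the C¹ topology, and satisfies f(x,1) = (g(x), 1) and f(x,0) = (x, 0) for every x ∈ 𝕋¹. -/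
open MeasureTheory Filter Topology Set unitInterval

noncomputable section

/-- The lifted closed strip `ℝ × [0,1] ⊆ ℝ²`. -/
abbrev strip : Set (ℝ × ℝ) := Set.univ ×ˢ Set.Icc (0 : ℝ) 1

open scoped NNReal

namespace ExtDiffeo

/-- near-identity C¹ maps are global diffeomorphisms -/
lemma nearId (Φ : ℝ × ℝ → ℝ × ℝ) (hΦ : ContDiff ℝ 1 Φ) (c : ℝ) (hc0 : 0 ≤ c) (hc : c ≤ 1/2)
    (hL : ∀ z w, ‖(Φ z - z) - (Φ w - w)‖ ≤ c * ‖z - w‖) :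
    ∃ e : (ℝ × ℝ) ≃ₜ (ℝ × ℝ), (∀ z, e z = Φ z) ∧ ContDiff ℝ 1 e.symm ∧
      ∀ z w, ‖e.symm z - e.symm w‖ ≤ 2 * ‖z - w‖ := by
  lift c to ℝ≥0 using hc0
  have hexp : ∀ z w, ‖z - w‖ ≤ 2 * ‖Φ z - Φ w‖ := by
    intro z w
    have h1 := hL z w
    have h2 : z - w = (Φ z - Φ w) - ((Φ z - z) - (Φ w - w)) := by abel
    have h3 : ‖z - w‖ ≤ ‖Φ z - Φ w‖ + ‖(Φ z - z) - (Φ w - w)‖ := by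
      conv_lhs => rw [h2]
      exact norm_sub_le _ _
    have h4 : c * ‖z - w‖ ≤ 1/2 * ‖z - w‖ := by gcongr
    linarith
  let I₀ : (ℝ × ℝ) ≃L[ℝ] (ℝ × ℝ) := ContinuousLinearEquiv.refl ℝ (ℝ × ℝ)
  have hA : ApproximatesLinearOn Φ (I₀ : (ℝ × ℝ) →L[ℝ] (ℝ × ℝ)) univ c := by
    intro z _ w _
    have := hL z w
    have h2 : Φ z - Φ w - (I₀ : (ℝ × ℝ) →L[ℝ] (ℝ × ℝ)) (z - w) = (Φ z - z) - (Φ w - w) := by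
      simp only [I₀, ContinuousLinearEquiv.coe_refl, ContinuousLinearMap.coe_id', id]
      abel
    rw [h2]
    exact this
  have hcN : c < ‖(I₀.symm : (ℝ × ℝ) →L[ℝ] (ℝ × ℝ))‖₊⁻¹ := by
    have : ‖(I₀.symm : (ℝ × ℝ) →L[ℝ] (ℝ × ℝ))‖₊ = 1 := by
      simp [I₀]
    rw [this, inv_one]
    rw [← NNReal.coe_lt_coe]
    rw [NNReal.coe_one]
    linarith
  let e := hA.toHomeomorph Φ (Or.inr hcN)
  have he : ∀ z, e z = Φ z := fun z => rfl
  have hee : (e : ℝ × ℝ → ℝ × ℝ) = Φ := rfl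
  refine ⟨e, he, ?_, ?_⟩
  · have hinj : ∀ z, Function.Injective (fderiv ℝ Φ z) := by
      intro z
      have hd : HasFDerivAt Φ (fderiv ℝ Φ z) z := (hΦ.differentiable (by norm_num) z).hasFDerivAt
      have hn : ‖fderiv ℝ (fun z => Φ z - z) z‖ ≤ c := by
        have := norm_fderiv_le_of_lipschitz ℝ (x₀ := z) (C := c)
          (f := fun z => Φ z - z) (LipschitzWith.of_dist_le_mul (by
            intro a b; rw [dist_eq_norm, dist_eq_norm]; exact hL a b))
        exact this
      have hd2 : fderiv ℝ (fun z => Φ z - z) z = fderiv ℝ Φ z - ContinuousLinearMap.id ℝ _ :=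
        (hd.sub (hasFDerivAt_id z)).fderiv
      rw [hd2] at hn
      rw [injective_iff_map_eq_zero]
      intro v hv
      have h1 := (fderiv ℝ Φ z - ContinuousLinearMap.id ℝ _).le_of_opNorm_le hn v
      have h2 : (fderiv ℝ Φ z - ContinuousLinearMap.id ℝ (ℝ × ℝ)) v = -v := by
        simp [hv]
      rw [h2, norm_neg] at h1
      have h4 : c * ‖v‖ ≤ 1/2 * ‖v‖ := by gcongr
      have : ‖v‖ = 0 := by linarith [norm_nonneg v]
      exact norm_eq_zero.1 this
    refine e.contDiff_symm (f₀' := fun z => (LinearEquiv.ofInjectiveEndo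
      (fderiv ℝ Φ z : (ℝ × ℝ) →ₗ[ℝ] (ℝ × ℝ)) (hinj z)).toContinuousLinearEquiv) ?_ (hee ▸ hΦ)
    intro z
    rw [hee]
    convert (hΦ.differentiable (by norm_num) z).hasFDerivAt using 1
    ext v <;> rfl
  · intro z w
    have := hexp (e.symm z) (e.symm w)
    rw [← he, ← he, e.apply_symm_apply, e.apply_symm_apply] at this
    exact this

lemma det2 (L : (ℝ × ℝ) →L[ℝ] (ℝ × ℝ)) :
    L.det = (L (1,0)).1 * (L (0,1)).2 - (L (0,1)).1 * (L (1,0)).2 := by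
  have : L.det = LinearMap.det (L : (ℝ × ℝ) →ₗ[ℝ] (ℝ × ℝ)) := rfl
  rw [this, ← LinearMap.det_toMatrix (Module.Basis.finTwoProd ℝ), Matrix.det_fin_two]
  simp [LinearMap.toMatrix_apply]

lemma measImage (a b : (ℝ × ℝ) ≃ₜ (ℝ × ℝ)) (a' b' : ℝ × ℝ → (ℝ × ℝ) →L[ℝ] (ℝ × ℝ))
    (ha : ∀ z, HasFDerivAt a (a' z) z) (hb : ∀ z, HasFDerivAt b (b' z) z)
    (hdet : ∀ z, (a' z).det = (b' z).det) (S : Set (ℝ × ℝ)) (hS : MeasurableSet S) :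
    volume ((fun z => b (a.symm z)) ⁻¹' S) = volume S := by
  have hT : MeasurableSet (b ⁻¹' S) := b.continuous.measurable hS
  have h1 := lintegral_abs_det_fderiv_eq_addHaar_image volume hT
    (fun z _ => (ha z).hasFDerivWithinAt) a.injective.injOn
  have h2 := lintegral_abs_det_fderiv_eq_addHaar_image volume hT
    (fun z _ => (hb z).hasFDerivWithinAt) b.injective.injOn
  simp_rw [hdet] at h1
  rw [h1] at h2
  rw [image_preimage_eq _ b.surjective] at h2
  rw [← h2]
  congr 1
  ext z
  constructor
  · intro hz
    exact ⟨a.symm z, hz, a.apply_symm_apply z⟩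
  · rintro ⟨w, hw, rfl⟩
    simpa using hw

/-- projection from the plane to the annulus -/
def pr (z : ℝ × ℝ) : CAnn := ((z.1 : T1), Set.projIcc 0 1 zero_le_one z.2)

lemma pr_cont : Continuous pr :=
  ((AddCircle.continuous_mk' 1).comp continuous_fst).prodMk
    (continuous_projIcc.comp continuous_snd)

lemma pr_coe (x : ℝ) (y : I) : pr (x, (y:ℝ)) = ((x : T1), y) := by
  simp [pr]

lemma equiv_int (Φ : ℝ × ℝ → ℝ × ℝ) (h : ∀ z, Φ (z + (1,0)) = Φ z + (1,0)) (n : ℤ) (z : ℝ × ℝ) :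
    Φ (z + n • ((1:ℝ),(0:ℝ))) = Φ z + n • ((1:ℝ),(0:ℝ)) := by
  induction n using Int.induction_on generalizing z with
  | zero => simp
  | succ n ih =>
    rw [add_zsmul, one_zsmul, ← add_assoc, h, ih, add_assoc]
  | pred n ih =>
    have h' : ∀ w, Φ (w - (1,0)) = Φ w - (1,0) := by
      intro w
      have := h (w - (1,0))
      rw [sub_add_cancel] at this
      rw [this]; abel
    rw [sub_zsmul, one_zsmul, ← sub_eq_add_neg, ← add_sub_assoc, h', ih, add_sub_assoc]

lemma pr_add_int (n : ℤ) (z : ℝ × ℝ) : pr (z + n • ((1:ℝ),(0:ℝ))) = pr z := by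
  unfold pr
  simp

/-- descend a map of the plane to the annulus -/
def desc (Φ : ℝ × ℝ → ℝ × ℝ) (z : CAnn) : CAnn := pr (Φ (Quotient.out z.1, (z.2 : ℝ)))

lemma desc_coe (Φ : ℝ × ℝ → ℝ × ℝ) (h : ∀ z, Φ (z + (1,0)) = Φ z + (1,0)) (x : ℝ) (y : I) :
    desc Φ ((x : T1), y) = pr (Φ (x, y)) := by
  have h1 : ((Quotient.out (x : T1) : ℝ) : T1) = (x : T1) := Quotient.out_eq _
  have h2 : ((Quotient.out (x : T1) - x : ℝ) : T1) = 0 := by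
    rw [AddCircle.coe_sub, h1, sub_self]
  rw [AddCircle.coe_eq_zero_iff] at h2
  obtain ⟨n, hn⟩ := h2
  have h3 : ((Quotient.out (x : T1) : ℝ), (y:ℝ)) = (x, (y:ℝ)) + n • ((1:ℝ),(0:ℝ)) := by
    ext
    · simp at hn ⊢; linarith
    · simp
  unfold desc
  simp only
  rw [h3, equiv_int Φ h, pr_add_int]

lemma desc_cont (Φ : ℝ × ℝ → ℝ × ℝ) (h : ∀ z, Φ (z + (1,0)) = Φ z + (1,0))
    (hc : Continuous Φ) : Continuous (desc Φ) := by
  have hq : IsOpenQuotientMap (Prod.map ((↑) : ℝ → T1) (id : I → I)) :=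
    (QuotientAddGroup.isOpenQuotientMap_mk).prodMap IsOpenQuotientMap.id
  rw [← hq.continuous_comp_iff]
  have : desc Φ ∘ (Prod.map ((↑) : ℝ → T1) (id : I → I)) =
      fun z : ℝ × I => pr (Φ (z.1, (z.2:ℝ))) := by
    ext1 z
    exact desc_coe Φ h z.1 z.2
  rw [this]
  exact pr_cont.comp (hc.comp (continuous_fst.prodMk (continuous_subtype_val.comp continuous_snd)))

lemma desc_inv (Φ Ψ : ℝ × ℝ → ℝ × ℝ) (h : ∀ z, Φ (z + (1,0)) = Φ z + (1,0))
    (h' : ∀ z, Ψ (z + (1,0)) = Ψ z + (1,0)) (hm : MapsTo Φ strip strip)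
    (hi : ∀ z, Ψ (Φ z) = z) (z : CAnn) : desc Ψ (desc Φ z) = z := by
  obtain ⟨x, y⟩ := z
  obtain ⟨x, rfl⟩ := QuotientAddGroup.mk_surjective x
  change desc Ψ (desc Φ ((x : T1), y)) = ((x : T1), y)
  rw [desc_coe Φ h]
  have hs : Φ (x, (y:ℝ)) ∈ strip := hm ⟨trivial, y.2⟩
  have h1 : pr (Φ (x, (y:ℝ))) = (((Φ (x, (y:ℝ))).1 : T1), ⟨(Φ (x, (y:ℝ))).2, hs.2⟩) := by
    unfold pr
    rw [projIcc_of_mem]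
  rw [h1, desc_coe Ψ h']
  simp only [Prod.mk.eta, hi]
  exact pr_coe x y

lemma vol_ann (E : Set CAnn) (hE : MeasurableSet E) :
    volume E = volume ((strip ∩ pr ⁻¹' E) ∩ (Ioc (0:ℝ) 1 ×ˢ (univ : Set ℝ))) := by
  have m1 : MeasurePreserving (Prod.map ((↑) : ℝ → T1) (id : I → I))
      ((volume.restrict (Ioc (0:ℝ) (0+1))).prod (volume : Measure I))
      ((volume : Measure T1).prod (volume : Measure I)) :=
    (AddCircle.measurePreserving_mk 1 0).prod (MeasurePreserving.id _)
  have m2 : MeasurePreserving (Prod.map (id : ℝ → ℝ) (Subtype.val : I → ℝ))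
      ((volume.restrict (Ioc (0:ℝ) (0+1))).prod (volume : Measure I))
      ((volume.restrict (Ioc (0:ℝ) (0+1))).prod (volume.restrict (Icc (0:ℝ) 1))) :=
    (MeasurePreserving.id _).prod (measurePreserving_subtype_coe measurableSet_Icc)
  have hst : MeasurableSet strip := MeasurableSet.univ.prod measurableSet_Icc
  have hEt : MeasurableSet (strip ∩ pr ⁻¹' E) := hst.inter (pr_cont.measurable hE)
  have e1 := m1.measure_preimage hE.nullMeasurableSet
  have e2 := m2.measure_preimage hEt.nullMeasurableSet
  have e3 : (Prod.map ((↑) : ℝ → T1) (id : I → I)) ⁻¹' E =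
      (Prod.map (id : ℝ → ℝ) (Subtype.val : I → ℝ)) ⁻¹' (strip ∩ pr ⁻¹' E) := by
    ext ⟨x, y⟩
    simp only [mem_preimage, Prod.map_apply, id, mem_inter_iff, pr_coe]
    exact ⟨fun h => ⟨⟨trivial, y.2⟩, h⟩, fun h => h.2⟩
  rw [e3, e2] at e1
  change ((volume : Measure T1).prod (volume : Measure I)) E = _
  rw [← e1, Measure.prod_restrict, Measure.restrict_apply hEt, zero_add]
  change volume _ = _
  congr 1
  ext z
  simp only [mem_inter_iff, mem_prod, mem_univ, true_and, and_true]
  tauto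

lemma fundD (Φ : ℝ × ℝ → ℝ × ℝ) (h : ∀ z, Φ (z + (1,0)) = Φ z + (1,0)) (hc : Continuous Φ) :
    IsAddFundamentalDomain (AddSubgroup.zmultiples ((1:ℝ),(0:ℝ)))
      (Φ ⁻¹' (Ioc (0:ℝ) 1 ×ˢ (univ : Set ℝ))) volume := by
  refine IsAddFundamentalDomain.mk'
    (hc.measurable (measurableSet_Ioc.prod MeasurableSet.univ)).nullMeasurableSet fun z => ?_
  obtain ⟨n, hn, hu⟩ := existsUnique_add_zsmul_mem_Ioc (zero_lt_one' ℝ) (Φ z).1 0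
  have key : ∀ m : ℤ, Φ (m • ((1:ℝ),(0:ℝ)) + z) ∈ Ioc (0:ℝ) 1 ×ˢ (univ : Set ℝ) ↔
      (Φ z).1 + m • (1:ℝ) ∈ Ioc (0:ℝ) (0+1) := by
    intro m
    rw [add_comm, equiv_int Φ h]
    simp
  refine ⟨⟨n • ((1:ℝ),(0:ℝ)), n, rfl⟩, (key n).2 hn, ?_⟩
  rintro ⟨_, m, rfl⟩ hm
  have := hu m ((key m).1 hm)
  subst this
  rfl

lemma desc_meas (Φ : ℝ × ℝ → ℝ × ℝ) (h : ∀ z, Φ (z + (1,0)) = Φ z + (1,0)) (hc : Continuous Φ)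
    (hs : ∀ z, Φ z ∈ strip ↔ z ∈ strip)
    (hv : ∀ S, MeasurableSet S → volume (Φ ⁻¹' S) = volume S) :
    Measure.map (desc Φ) volume = volume := by
  have hdc := (desc_cont Φ h hc).measurable
  ext E hE
  rw [Measure.map_apply hdc hE, vol_ann _ (hdc hE), vol_ann _ hE]
  have hst : MeasurableSet strip := MeasurableSet.univ.prod measurableSet_Icc
  have hEt : MeasurableSet (strip ∩ pr ⁻¹' E) := hst.inter (pr_cont.measurable hE)
  have e1 : strip ∩ pr ⁻¹' (desc Φ ⁻¹' E) = Φ ⁻¹' (strip ∩ pr ⁻¹' E) := by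
    ext z
    simp only [mem_inter_iff, mem_preimage, hs]
    refine and_congr_right fun hz => ?_
    have : pr z = ((z.1 : T1), ⟨z.2, hz.2⟩) := by
      unfold pr; rw [projIcc_of_mem]
    rw [this, desc_coe Φ h]
  rw [e1]
  have d1 := fundD id (fun _ => rfl) continuous_id
  have d2 := fundD Φ h hc
  rw [preimage_id] at d1
  rw [d1.measure_set_eq d2 (hc.measurable hEt) ?_, ← preimage_inter,
    hv _ (hEt.inter (measurableSet_Ioc.prod MeasurableSet.univ))]
  rintro ⟨_, n, rfl⟩
  ext z
  change Φ (n • ((1:ℝ),(0:ℝ)) + z) ∈ strip ∩ pr ⁻¹' E ↔ Φ z ∈ strip ∩ pr ⁻¹' E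
  rw [add_comm, equiv_int Φ h]
  simp only [mem_inter_iff, mem_preimage, pr_add_int]
  simp [strip]

/-- the auxiliary height function -/
def τ (y : ℝ) : ℝ :=
  Real.sin (2 * Real.pi * y) / (4 * Real.pi) - Real.sin (Real.pi * y) / (2 * Real.pi)

/-- derivative of `τ` -/
def τ' (y : ℝ) : ℝ := (Real.cos (2 * Real.pi * y) - Real.cos (Real.pi * y)) / 2

lemma hasDeriv_τ (y : ℝ) : HasDerivAt τ (τ' y) y := by
  have h1 : HasDerivAt (fun y => Real.sin (2 * Real.pi * y)) (Real.cos (2 * Real.pi * y) * (2 * Real.pi * 1)) y :=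
    ((hasDerivAt_id y).const_mul (2 * Real.pi)).sin
  have h2 : HasDerivAt (fun y => Real.sin (Real.pi * y)) (Real.cos (Real.pi * y) * (Real.pi * 1)) y :=
    ((hasDerivAt_id y).const_mul (Real.pi)).sin
  refine ((h1.div_const (4 * Real.pi)).sub (h2.div_const (2 * Real.pi))).congr_deriv ?_
  unfold τ'
  have := Real.pi_pos
  field_simp
  ring

lemma hasDeriv_τ' (y : ℝ) : HasDerivAt τ'
    ((-Real.sin (2 * Real.pi * y) * (2 * Real.pi * 1) + Real.sin (Real.pi * y) * (Real.pi * 1)) / 2) y := by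
  have h1 : HasDerivAt (fun y => Real.cos (2 * Real.pi * y)) (-Real.sin (2 * Real.pi * y) * (2 * Real.pi * 1)) y :=
    ((hasDerivAt_id y).const_mul (2 * Real.pi)).cos
  have h2 : HasDerivAt (fun y => Real.cos (Real.pi * y)) (-Real.sin (Real.pi * y) * (Real.pi * 1)) y :=
    ((hasDerivAt_id y).const_mul (Real.pi)).cos
  refine ((h1.sub h2).div_const 2).congr_deriv ?_
  ring

lemma τ'_le (y : ℝ) : |τ' y| ≤ 1 := by
  unfold τ'
  rw [abs_le]
  have := Real.cos_le_one (2 * Real.pi * y)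
  have := Real.neg_one_le_cos (2 * Real.pi * y)
  have := Real.cos_le_one (Real.pi * y)
  have := Real.neg_one_le_cos (Real.pi * y)
  constructor <;> linarith

lemma lip_of_deriv (f f' : ℝ → ℝ) (C : ℝ) (h : ∀ x, HasDerivAt f (f' x) x) (hb : ∀ x, |f' x| ≤ C)
    (x y : ℝ) : |f x - f y| ≤ C * |x - y| := by
  have := convex_univ.norm_image_sub_le_of_norm_hasDerivWithin_le (f := f) (f' := f') (C := C)
    (x := y) (y := x) (s := univ) (fun x _ => (h x).hasDerivWithinAt) (fun x _ => hb x) trivial trivial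
  exact this

lemma τ_lip (x y : ℝ) : |τ x - τ y| ≤ |x - y| := by
  simpa using lip_of_deriv τ τ' 1 hasDeriv_τ τ'_le x y

lemma τ'_lip (x y : ℝ) : |τ' x - τ' y| ≤ 5 * |x - y| := by
  refine lip_of_deriv τ' _ 5 hasDeriv_τ' (fun y => ?_) x y
  have hp := Real.pi_pos
  have hp3 := Real.pi_lt_d2
  have a1 := Real.sin_le_one (2 * Real.pi * y)
  have a2 := Real.neg_one_le_sin (2 * Real.pi * y)
  have a3 := Real.sin_le_one (Real.pi * y)
  have a4 := Real.neg_one_le_sin (Real.pi * y)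
  rw [abs_le]
  constructor <;> nlinarith

lemma τ_contDiff : ContDiff ℝ 1 τ := by unfold τ; fun_prop
lemma τ'_contDiff : ContDiff ℝ 1 τ' := by unfold τ'; fun_prop
lemma τ0 : τ 0 = 0 := by simp [τ]
lemma τ1 : τ 1 = 0 := by simp [τ, Real.sin_two_pi]
lemma τ'0 : τ' 0 = 0 := by simp [τ']
lemma τ'1 : τ' 1 = 1 := by simp [τ', Real.cos_two_pi]

section maps
variable (u : ℝ → ℝ)

/-- the vertical shear -/
def mA (z : ℝ × ℝ) : ℝ × ℝ := (z.1, z.2 + (u (z.1 + τ z.2) - u z.1))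

/-- the horizontal shear -/
def mB (z : ℝ × ℝ) : ℝ × ℝ := (z.1 + τ' z.2 * u (z.1 + τ z.2), z.2)

lemma mA_contDiff (hu : ContDiff ℝ 1 u) : ContDiff ℝ 1 (mA u) := by
  have := τ_contDiff
  unfold mA
  fun_prop

lemma mB_contDiff (hu : ContDiff ℝ 1 u) : ContDiff ℝ 1 (mB u) := by
  have := τ_contDiff
  have := τ'_contDiff
  unfold mB
  fun_prop

lemma inner_fderiv (hu : ContDiff ℝ 1 u) (z : ℝ × ℝ) :
    HasFDerivAt (fun z : ℝ × ℝ => u (z.1 + τ z.2))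
      (deriv u (z.1 + τ z.2) • (ContinuousLinearMap.fst ℝ ℝ ℝ +
        τ' z.2 • ContinuousLinearMap.snd ℝ ℝ ℝ)) z := by
  have h1 : HasFDerivAt (fun z : ℝ × ℝ => τ z.2) (τ' z.2 • ContinuousLinearMap.snd ℝ ℝ ℝ) z :=
    (hasDeriv_τ z.2).comp_hasFDerivAt z hasFDerivAt_snd
  exact ((hu.differentiable (by norm_num) _).hasDerivAt).comp_hasFDerivAt z (hasFDerivAt_fst.add h1)

lemma mA_fderiv (hu : ContDiff ℝ 1 u) (z : ℝ × ℝ) :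
    (fderiv ℝ (mA u) z).det = 1 + τ' z.2 * deriv u (z.1 + τ z.2) := by
  have h2 : HasFDerivAt (fun z : ℝ × ℝ => u z.1) (deriv u z.1 • ContinuousLinearMap.fst ℝ ℝ ℝ) z :=
    ((hu.differentiable (by norm_num) z.1).hasDerivAt).comp_hasFDerivAt z hasFDerivAt_fst
  have h3 : HasFDerivAt (mA u) _ z :=
    (hasFDerivAt_fst).prodMk (hasFDerivAt_snd.add ((inner_fderiv u hu z).sub h2))
  rw [h3.fderiv, det2]
  simp
  ring

lemma mB_fderiv (hu : ContDiff ℝ 1 u) (z : ℝ × ℝ) :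
    (fderiv ℝ (mB u) z).det = 1 + τ' z.2 * deriv u (z.1 + τ z.2) := by
  have h2 := (hasDeriv_τ' z.2).comp_hasFDerivAt z (hasFDerivAt_snd (𝕜 := ℝ) (E := ℝ) (F := ℝ))
  have h3 : HasFDerivAt (mB u) _ z :=
    (hasFDerivAt_fst.add (h2.mul (inner_fderiv u hu z))).prodMk hasFDerivAt_snd
  rw [h3.fderiv, det2]
  simp

lemma mA_per (hp : ∀ x, u (x + 1) = u x) (z : ℝ × ℝ) : mA u (z + (1,0)) = mA u z + (1,0) := by
  have : z.1 + 1 + τ z.2 = z.1 + τ z.2 + 1 := by ring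
  simp [mA, hp, this]

lemma mB_per (hp : ∀ x, u (x + 1) = u x) (z : ℝ × ℝ) : mB u (z + (1,0)) = mB u z + (1,0) := by
  have : z.1 + 1 + τ z.2 = z.1 + τ z.2 + 1 := by ring
  simp [mB, hp, this]
  ring

variable (δ : ℝ) (hδ : 0 ≤ δ) (hb : ∀ x, |u x| ≤ δ) (hl : ∀ x y, |u x - u y| ≤ δ * |x - y|)
include hδ hl

lemma inner_lip (z w : ℝ × ℝ) :
    |u (z.1 + τ z.2) - u (w.1 + τ w.2)| ≤ δ * (2 * ‖z - w‖) := by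
  refine (hl _ _).trans ?_
  gcongr
  have h1 : |z.1 - w.1| ≤ ‖z - w‖ := norm_fst_le (z - w)
  have h2 : |z.2 - w.2| ≤ ‖z - w‖ := norm_snd_le (z - w)
  have h3 := τ_lip z.2 w.2
  have h4 : z.1 + τ z.2 - (w.1 + τ w.2) = (z.1 - w.1) + (τ z.2 - τ w.2) := by ring
  rw [h4]
  have := abs_add_le (z.1 - w.1) (τ z.2 - τ w.2)
  linarith

lemma mA_lip (z w : ℝ × ℝ) : ‖(mA u z - z) - (mA u w - w)‖ ≤ 7 * δ * ‖z - w‖ := by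
  have h0 : (mA u z - z) - (mA u w - w) =
      (0, (u (z.1 + τ z.2) - u (w.1 + τ w.2)) - (u z.1 - u w.1)) := by
    ext <;> simp [mA]
    ring
  have h1 : |z.1 - w.1| ≤ ‖z - w‖ := norm_fst_le (z - w)
  have h2 := inner_lip u δ hδ hl z w
  have h3 := hl z.1 w.1
  have h4 : δ * |z.1 - w.1| ≤ δ * ‖z - w‖ := by gcongr
  have h5 : 0 ≤ δ * ‖z - w‖ := by positivity
  rw [h0, norm_prod_le_iff]
  constructor
  · simp; nlinarith
  · refine (abs_sub _ _).trans ?_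
    nlinarith

include hb
lemma mB_lip (z w : ℝ × ℝ) : ‖(mB u z - z) - (mB u w - w)‖ ≤ 7 * δ * ‖z - w‖ := by
  have h0 : (mB u z - z) - (mB u w - w) =
      (τ' z.2 * (u (z.1 + τ z.2) - u (w.1 + τ w.2)) + (τ' z.2 - τ' w.2) * u (w.1 + τ w.2), 0) := by
    ext <;> simp [mB]
    ring
  have h1 : |z.2 - w.2| ≤ ‖z - w‖ := norm_snd_le (z - w)
  have h2 := inner_lip u δ hδ hl z w
  have h5 : 0 ≤ δ * ‖z - w‖ := by positivity
  have h6 : |τ' z.2| * |u (z.1 + τ z.2) - u (w.1 + τ w.2)| ≤ 1 * (δ * (2 * ‖z - w‖)) := by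
    gcongr
    exact τ'_le _
  have h7 : |τ' z.2 - τ' w.2| * |u (w.1 + τ w.2)| ≤ (5 * ‖z - w‖) * δ := by
    gcongr
    · exact (τ'_lip _ _).trans (by gcongr)
    · exact hb _
  rw [h0, norm_prod_le_iff]
  constructor
  · refine (abs_add_le _ _).trans ?_
    rw [abs_mul, abs_mul]
    nlinarith
  · simp; nlinarith

lemma mBA_close (z : ℝ × ℝ) : ‖mB u z - mA u z‖ ≤ 2 * δ := by
  rw [norm_prod_le_iff]
  constructor
  · have : (mB u z - mA u z).1 = τ' z.2 * u (z.1 + τ z.2) := by simp [mB, mA]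
    rw [this, Real.norm_eq_abs, abs_mul]
    have : |τ' z.2| * |u (z.1 + τ z.2)| ≤ 1 * δ := by
      gcongr
      · exact τ'_le _
      · exact hb _
    linarith
  · have : (mB u z - mA u z).2 = u z.1 - u (z.1 + τ z.2) := by simp [mB, mA]
    rw [this, Real.norm_eq_abs]
    have := abs_sub (u z.1) (u (z.1 + τ z.2))
    linarith [hb z.1, hb (z.1 + τ z.2)]

omit hb
lemma mA_strip (hδ' : 7 * δ ≤ 1/2) (z : ℝ × ℝ) : mA u z ∈ strip ↔ z ∈ strip := by
  have hm : ∀ x, StrictMono (fun y => (mA u (x, y)).2) := by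
    intro x a b hab
    have h1 := (norm_snd_le _).trans (mA_lip u δ hδ hl (x, b) (x, a))
    have h2 : ‖((x, b) : ℝ × ℝ) - (x, a)‖ = b - a := by
      simp [Prod.norm_def, abs_of_pos (sub_pos.2 hab), hab.le]
    rw [h2] at h1
    simp only [Prod.snd_sub, Real.norm_eq_abs] at h1
    have h3 := (abs_le.1 h1).1
    have h4 : 7 * δ * (b - a) ≤ 1/2 * (b - a) := by
      have := sub_pos.2 hab
      gcongr
    change (mA u (x, a)).2 < (mA u (x, b)).2
    linarith
  obtain ⟨x, y⟩ := z
  have e0 : (mA u (x, 0)).2 = 0 := by simp [mA, τ0]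
  have e1 : (mA u (x, 1)).2 = 1 := by simp [mA, τ1]
  have l0 := (hm x).le_iff_le (a := 0) (b := y)
  have l1 := (hm x).le_iff_le (a := y) (b := 1)
  simp only [e0, e1] at l0 l1
  simp only [strip, mem_prod, mem_univ, true_and, mem_Icc, l0, l1]

end maps

lemma symm_per (e : (ℝ × ℝ) ≃ₜ (ℝ × ℝ)) (h : ∀ z, e (z + (1,0)) = e z + (1,0)) (z : ℝ × ℝ) :
    e.symm (z + (1,0)) = e.symm z + (1,0) := by
  apply e.injective
  rw [h, e.apply_symm_apply, e.apply_symm_apply]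

end ExtDiffeo

/-- **Lemma 5.4.** Any C¹-small circle diffeomorphism on the top boundary circle extends
to a C¹-small area-preserving diffeomorphism of the closed annulus which is the identity
on the bottom boundary circle. -/
theorem extension_of_small_circle_diffeo (ε : ℝ) (hε : 0 < ε) :
    ∃ δ : ℝ, 0 < δ ∧ ∀ g : T1 ≃ₜ T1, CircleC1DiffeoClose δ g →
      ∃ (f : CAnn ≃ₜ CAnn) (F G : ℝ × ℝ → ℝ × ℝ),
        -- `f` preserves Lebesgue measure
        Measure.map (⇑f) volume = volume ∧
        -- boundary conditions
        (∀ x : T1, f (x, 1) = (g x, 1)) ∧ (∀ x : T1, f (x, 0) = (x, 0)) ∧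
        -- `F` is a C¹ lift of `f` with C¹ inverse `G`, so `f` is a C¹ diffeomorphism
        ContDiffOn ℝ 1 F strip ∧ ContDiffOn ℝ 1 G strip ∧
        Set.MapsTo F strip strip ∧ Set.MapsTo G strip strip ∧
        (∀ z ∈ strip, G (F z) = z) ∧ (∀ z ∈ strip, F (G z) = z) ∧
        (∀ z ∈ strip, F (z.1 + 1, z.2) = F z + (1, 0)) ∧
        (∀ (x : ℝ) (y : I), ∃ h : (F (x, (y : ℝ))).2 ∈ Set.Icc (0 : ℝ) 1,
          f ((x : T1), y) = (((F (x, (y : ℝ))).1 : T1), ⟨(F (x, (y : ℝ))).2, h⟩)) ∧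
        -- `f` is `ε`-close to the identity in the C¹ topology
        (∀ z ∈ strip, ‖F z - z‖ < ε) ∧
        (∀ z ∈ strip,
          ‖fderivWithin ℝ F strip z - ContinuousLinearMap.id ℝ (ℝ × ℝ)‖ < ε) := by
  classical
  refine ⟨min (1/14) (ε/56), by positivity, ?_⟩
  set δ := min (1/14) (ε/56) with hδdef
  have hδ14 : δ ≤ 1/14 := min_le_left _ _
  have hδε : δ ≤ ε/56 := min_le_right _ _
  have hδ0 : 0 ≤ δ := by positivity
  rintro g ⟨gc, hgc, -, hgp, hgg, hg0, hg1⟩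
  obtain ⟨u, hudef⟩ : ∃ u : ℝ → ℝ, u = fun x => gc x - x := ⟨_, rfl⟩
  have hu : ContDiff ℝ 1 u := by rw [hudef]; fun_prop
  have hux : ∀ x, x + u x = gc x := by intro x; simp [hudef]
  have hb : ∀ x, |u x| ≤ δ := by intro x; rw [hudef]; exact (hg0 x).le
  have hp : ∀ x, u (x + 1) = u x := by intro x; simp [hudef, hgp]
  have hl : ∀ x y, |u x - u y| ≤ δ * |x - y| := by
    refine ExtDiffeo.lip_of_deriv u (fun x => deriv gc x - 1) δ (fun x => ?_) (fun x => (hg1 x).le)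
    rw [hudef]
    exact (hgc.differentiable (by norm_num) x).hasDerivAt.sub (hasDerivAt_id x)
  have h7 : 7 * δ ≤ 1/2 := by linarith
  have h70 : 0 ≤ 7 * δ := by linarith
  have cA := ExtDiffeo.mA_contDiff u hu
  have cB := ExtDiffeo.mB_contDiff u hu
  have lA := ExtDiffeo.mA_lip u δ hδ0 hl
  have lB := ExtDiffeo.mB_lip u δ hδ0 hb hl
  obtain ⟨a, ha, ca, la⟩ := ExtDiffeo.nearId (ExtDiffeo.mA u) cA (7 * δ) h70 h7 lA
  obtain ⟨b, hbb, cb, lb⟩ := ExtDiffeo.nearId (ExtDiffeo.mB u) cB (7 * δ) h70 h7 lB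
  have hae : (a : ℝ × ℝ → ℝ × ℝ) = ExtDiffeo.mA u := funext ha
  have hbe : (b : ℝ × ℝ → ℝ × ℝ) = ExtDiffeo.mB u := funext hbb
  have pa : ∀ z, a (z + (1,0)) = a z + (1,0) := by rw [hae]; exact ExtDiffeo.mA_per u hp
  have pb : ∀ z, b (z + (1,0)) = b z + (1,0) := by rw [hbe]; exact ExtDiffeo.mB_per u hp
  have pa' := ExtDiffeo.symm_per a pa
  have pb' := ExtDiffeo.symm_per b pb
  have sa : ∀ z, a z ∈ strip ↔ z ∈ strip := by
    rw [hae]; exact ExtDiffeo.mA_strip u δ hδ0 hl h7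
  have sb : ∀ z, b z ∈ strip ↔ z ∈ strip := by
    intro z; rw [hbe]; simp [ExtDiffeo.mB, strip]
  have sa' : ∀ z, a.symm z ∈ strip ↔ z ∈ strip := by
    intro z; rw [← sa, a.apply_symm_apply]
  have sb' : ∀ z, b.symm z ∈ strip ↔ z ∈ strip := by
    intro z; rw [← sb, b.apply_symm_apply]
  obtain ⟨F, hF⟩ : ∃ F : ℝ × ℝ → ℝ × ℝ, F = fun z => b (a.symm z) := ⟨_, rfl⟩
  obtain ⟨G, hG⟩ : ∃ G : ℝ × ℝ → ℝ × ℝ, G = fun z => a (b.symm z) := ⟨_, rfl⟩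
  have cF : ContDiff ℝ 1 F := by rw [hF, hbe]; exact cB.comp ca
  have cG : ContDiff ℝ 1 G := by rw [hG, hae]; exact cA.comp cb
  have pF : ∀ z, F (z + (1,0)) = F z + (1,0) := by intro z; simp only [hF, pa', pb]
  have pG : ∀ z, G (z + (1,0)) = G z + (1,0) := by intro z; simp only [hG, pb', pa]
  have sF : ∀ z, F z ∈ strip ↔ z ∈ strip := by intro z; rw [hF]; exact (sb _).trans (sa' _)
  have sG : ∀ z, G z ∈ strip ↔ z ∈ strip := by intro z; rw [hG]; exact (sa _).trans (sb' _)
  have GF : ∀ z, G (F z) = z := by intro z; simp [hF, hG]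
  have FG : ∀ z, F (G z) = z := by intro z; simp [hF, hG]
  have mF : MapsTo F strip strip := fun z hz => (sF z).2 hz
  have mG : MapsTo G strip strip := fun z hz => (sG z).2 hz
  have vF : ∀ S, MeasurableSet S → volume (F ⁻¹' S) = volume S := by
    intro S hS
    rw [hF]
    refine ExtDiffeo.measImage a b (fun z => fderiv ℝ (ExtDiffeo.mA u) z)
      (fun z => fderiv ℝ (ExtDiffeo.mB u) z) ?_ ?_ ?_ S hS
    · intro z; rw [hae]; exact (cA.differentiable (by norm_num) z).hasFDerivAt
    · intro z; rw [hbe]; exact (cB.differentiable (by norm_num) z).hasFDerivAt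
    · intro z; rw [ExtDiffeo.mA_fderiv u hu, ExtDiffeo.mB_fderiv u hu]
  have F1 : ∀ x : ℝ, F (x, 1) = (gc x, 1) := by
    intro x
    have : a.symm (x, 1) = (x, 1) := by
      rw [a.symm_apply_eq, ha]; simp [ExtDiffeo.mA, ExtDiffeo.τ1]
    simp [hF, this, hbe, ExtDiffeo.mB, ExtDiffeo.τ1, ExtDiffeo.τ'1, hux]
  have F0 : ∀ x : ℝ, F (x, 0) = (x, 0) := by
    intro x
    have : a.symm (x, 0) = (x, 0) := by
      rw [a.symm_apply_eq, ha]; simp [ExtDiffeo.mA, ExtDiffeo.τ0]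
    simp [hF, this, hbe, ExtDiffeo.mB, ExtDiffeo.τ0, ExtDiffeo.τ'0]
  have LF : ∀ z w, ‖(F z - z) - (F w - w)‖ ≤ 28 * δ * ‖z - w‖ := by
    intro z w
    have e1 : ∀ z, F z - z = ExtDiffeo.mB u (a.symm z) - ExtDiffeo.mA u (a.symm z) := by
      intro z; rw [hF, ← ha, ← hbb, a.apply_symm_apply]
    have e2 : ∀ p q : ℝ × ℝ, (ExtDiffeo.mB u p - ExtDiffeo.mA u p) -
        (ExtDiffeo.mB u q - ExtDiffeo.mA u q) =
        ((ExtDiffeo.mB u p - p) - (ExtDiffeo.mB u q - q)) -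
        ((ExtDiffeo.mA u p - p) - (ExtDiffeo.mA u q - q)) := by
      intro p q; abel
    rw [e1, e1, e2]
    refine (norm_sub_le _ _).trans ?_
    have i1 := lB (a.symm z) (a.symm w)
    have i2 := lA (a.symm z) (a.symm w)
    have i3 := la z w
    have i4 : 7 * δ * ‖a.symm z - a.symm w‖ ≤ 7 * δ * (2 * ‖z - w‖) := by gcongr
    linarith
  refine ⟨⟨⟨ExtDiffeo.desc F, ExtDiffeo.desc G, ExtDiffeo.desc_inv F G pF pG mF GF,
    ExtDiffeo.desc_inv G F pG pF mG FG⟩, ExtDiffeo.desc_cont F pF cF.continuous,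
    ExtDiffeo.desc_cont G pG cG.continuous⟩, F, G,
    ExtDiffeo.desc_meas F pF cF.continuous sF vF, ?_, ?_, cF.contDiffOn, cG.contDiffOn, mF, mG,
    fun z _ => GF z, fun z _ => FG z, ?_, ?_, ?_, ?_⟩
  · intro x
    obtain ⟨x, rfl⟩ := QuotientAddGroup.mk_surjective x
    change ExtDiffeo.desc F ((x : T1), 1) = (g (x : T1), 1)
    rw [ExtDiffeo.desc_coe F pF, hgg, ← ExtDiffeo.pr_coe]
    simp [F1]
  · intro x
    obtain ⟨x, rfl⟩ := QuotientAddGroup.mk_surjective x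
    change ExtDiffeo.desc F ((x : T1), 0) = ((x : T1), 0)
    rw [ExtDiffeo.desc_coe F pF, ← ExtDiffeo.pr_coe]
    simp [F0]
  · intro z _
    rw [← pF]
    congr 1
    ext <;> simp
  · intro x y
    have hs : F (x, (y:ℝ)) ∈ strip := mF ⟨trivial, y.2⟩
    refine ⟨hs.2, ?_⟩
    change ExtDiffeo.desc F ((x : T1), y) = _
    rw [ExtDiffeo.desc_coe F pF]
    unfold ExtDiffeo.pr
    rw [projIcc_of_mem]
  · intro z _
    have e1 : F z - z = ExtDiffeo.mB u (a.symm z) - ExtDiffeo.mA u (a.symm z) := by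
      rw [hF, ← ha, ← hbb, a.apply_symm_apply]
    rw [e1]
    have := ExtDiffeo.mBA_close u δ hδ0 hb hl (a.symm z)
    linarith
  · intro z hz
    have hd : HasFDerivAt F (fderiv ℝ F z) z := (cF.differentiable (by norm_num) z).hasFDerivAt
    have hud : UniqueDiffWithinAt ℝ strip z :=
      (uniqueDiffOn_univ.prod (uniqueDiffOn_Icc zero_lt_one)) z hz
    rw [hd.hasFDerivWithinAt.fderivWithin hud]
    have hd2 : fderiv ℝ (fun z => F z - z) z = fderiv ℝ F z - ContinuousLinearMap.id ℝ _ :=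
      (hd.sub (hasFDerivAt_id z)).fderiv
    rw [← hd2]
    have := norm_fderiv_le_of_lipschitz ℝ (x₀ := z) (C := (28 * δ).toNNReal)
      (f := fun z => F z - z) (LipschitzWith.of_dist_le_mul (by
        intro p q
        rw [dist_eq_norm, dist_eq_norm, Real.coe_toNNReal _ (by linarith)]
        exact LF p q))
    rw [Real.coe_toNNReal _ (by linarith)] at this
    linarith
end
end
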